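/- arXiv:2509.02126 — 14 statements merged into one kernel-verified Lean document; each statement's English description precedes it below -/
import Mathlib

section
/- Let l > 0 and let F : [0,l] × ℝ → ℝ be continuous and Lipschitz continuous in the second variable. Suppose y₁, y₂ : [0,l] → ℝ are differentiable functions with y₁(r) ≤ y₂(r) for all r ∈ [0,l], and satisfying y₂'(r) − F(r, y₂(r)) ≤ 0 and y₁'(r) − F(r, y₁(r)) ≥ 0 for all r ∈ [0,l]. Then there exists a differentiable function φ : [0,l] → ℝ such that φ'(r) = F(r, φ(r)) and y₁(r) ≤ φ(r) ≤ y₂(r) for all r ∈ [0,l]. -/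
/-! The lower barrier `y₁` is the supersolution and the upper barrier `y₂` the subsolution, so the
region between them is invariant backwards in `r`, and the equation is solved backwards from the
terminal value `φ l = y₁ l`.  To get a solution on all of `[0, l]` at once, the vector field is
replaced by `G r y = F r (c r y)`, where `c r` is the projection of `ℝ` onto `[y₁ r, y₂ r]`.  This
field is bounded, so Picard–Lindelöf applies on the whole interval.  Where the solution `φ` exceeds
`y₂` it satisfies `φ' = F r (y₂ r) ≥ y₂'`, so the gap `φ - y₂` is nondecreasing while it is
positive; as it is nonpositive at `l`, it is never positive (`nonpos_of_deriv_nonneg_of_pos`).  The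
same argument gives `y₁ ≤ φ`, and between the barriers `G r (φ r) = F r (φ r)`.
-/

open Set

/-- A maximum principle run backwards from `l`: a function that is nondecreasing wherever it is
positive, and nonpositive at the right endpoint, is nonpositive. -/
theorem nonpos_of_deriv_nonneg_of_pos {l : ℝ} {w w' : ℝ → ℝ}
    (hw : ∀ r ∈ Icc (0:ℝ) l, HasDerivWithinAt w (w' r) (Icc 0 l) r)
    (hl : w l ≤ 0) (hpos : ∀ r ∈ Icc (0:ℝ) l, 0 < w r → 0 ≤ w' r) :
    ∀ r ∈ Icc (0:ℝ) l, w r ≤ 0 := by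
  have hmaps : MapsTo (fun s => l - s) (Icc (0:ℝ) l) (Icc 0 l) := fun s hs =>
    ⟨by linarith [hs.2], by linarith [hs.1]⟩
  have hu : ∀ s ∈ Icc (0:ℝ) l,
      HasDerivWithinAt (fun s => w (l - s)) (-w' (l - s)) (Icc 0 l) s := by
    intro s hs
    have h := (hw (l - s) (hmaps hs)).comp s ((hasDerivWithinAt_id s _).const_sub l) hmaps
    simpa [Function.comp_def] using h
  intro r hr
  -- For every `ε > 0` the reversed function stays below the strictly increasing line `ε * (1 + s)`.
  have key : ∀ ε > 0, w r ≤ ε * (1 + l) := by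
    intro ε hε
    have h := image_le_of_deriv_right_lt_deriv_boundary
      (f := fun s => w (l - s)) (f' := fun s => -w' (l - s)) (a := 0) (b := l)
      (B := fun s => ε * (1 + s)) (B' := fun _ => ε)
      (fun s hs => (hu s hs).continuousWithinAt)
      (fun s hs => ((hu s (Ico_subset_Icc_self hs)).mono_of_mem_nhdsWithin
        (Icc_mem_nhdsGE_of_mem hs)))
      (by simp only [sub_zero]; linarith)
      (fun s => by simpa using ((hasDerivAt_id s).const_add 1).const_mul ε)
      (fun s hs heq => by
        have h1 : 0 < w (l - s) := by
          have := hs.1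
          rw [show w (l - s) = ε * (1 + s) from heq]
          positivity
        have := hpos _ (hmaps (Ico_subset_Icc_self hs)) h1
        linarith)
      (hmaps hr)
    simp only [sub_sub_cancel] at h
    nlinarith [hr.1, hr.2]
  by_contra! hcon
  have hl1 : 0 < 1 + l := by linarith [hr.1, hr.2]
  have h := key (w r / (2 * (1 + l))) (by positivity)
  have : w r / (2 * (1 + l)) * (1 + l) = w r / 2 := by field_simp
  linarith

/-- Finite-interval ODE squeeze lemma (Lemma 2.1, finite case): between a
differentiable supersolution `y₁` and subsolution `y₂` of `y' = F(r, y)` on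
`[0, l]` there is an exact solution `φ`. -/
theorem odeSqueeze_finite (l : ℝ) (hl : 0 < l) (F : ℝ → ℝ → ℝ)
    (hFcont : ContinuousOn (fun p : ℝ × ℝ => F p.1 p.2) (Icc 0 l ×ˢ univ))
    (hFlip : ∃ K : NNReal, ∀ r ∈ Icc (0:ℝ) l, LipschitzWith K (fun y => F r y))
    (y₁ y₂ d₁ d₂ : ℝ → ℝ)
    (hy₁ : ∀ r ∈ Icc (0:ℝ) l, HasDerivWithinAt y₁ (d₁ r) (Icc 0 l) r)
    (hy₂ : ∀ r ∈ Icc (0:ℝ) l, HasDerivWithinAt y₂ (d₂ r) (Icc 0 l) r)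
    (hle : ∀ r ∈ Icc (0:ℝ) l, y₁ r ≤ y₂ r)
    (hsub : ∀ r ∈ Icc (0:ℝ) l, d₂ r - F r (y₂ r) ≤ 0)
    (hsup : ∀ r ∈ Icc (0:ℝ) l, 0 ≤ d₁ r - F r (y₁ r)) :
    ∃ φ : ℝ → ℝ, ∀ r ∈ Icc (0:ℝ) l,
      HasDerivWithinAt φ (F r (φ r)) (Icc 0 l) r ∧ y₁ r ≤ φ r ∧ φ r ≤ y₂ r := by
  obtain ⟨K, hK⟩ := hFlip
  have c₁ : ContinuousOn y₁ (Icc 0 l) := fun r hr => (hy₁ r hr).continuousWithinAt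
  have c₂ : ContinuousOn y₂ (Icc 0 l) := fun r hr => (hy₂ r hr).continuousWithinAt
  have hFcomp : ∀ g : ℝ → ℝ, ContinuousOn g (Icc 0 l) →
      ContinuousOn (fun r => F r (g r)) (Icc 0 l) := fun g hg =>
    hFcont.comp (f := fun r => (r, g r)) (continuousOn_id.prodMk hg) fun r hr => ⟨hr, mem_univ _⟩
  let c : ℝ → ℝ → ℝ := fun r y => max (y₁ r) (min (y₂ r) y)
  have hc_lip : ∀ r, LipschitzWith 1 (c r) := fun r =>
    (LipschitzWith.id.const_min (y₂ r)).const_max (y₁ r)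
  -- By the Lipschitz bound, the truncated field is dominated by its size on `y₁` plus `K` times
  -- the gap, a continuous function of `r`.
  obtain ⟨C, hC⟩ := isCompact_Icc.exists_bound_of_continuousOn
    (((hFcomp y₁ c₁).abs).add ((c₂.sub c₁).const_mul (K : ℝ)))
  have hbound : ∀ r ∈ Icc (0:ℝ) l, ∀ y, ‖F r (c r y)‖ ≤ C.toNNReal := by
    intro r hr y
    have h1 : y₁ r ≤ c r y := le_max_left _ _
    have h2 : c r y ≤ y₂ r := max_le (hle r hr) (min_le_left _ _)
    have h3 := (hK r hr).dist_le_mul (c r y) (y₁ r)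
    rw [Real.dist_eq, Real.dist_eq, abs_of_nonneg (sub_nonneg.2 h1)] at h3
    have h4 : (K : ℝ) * (c r y - y₁ r) ≤ K * (y₂ r - y₁ r) := by gcongr
    have h5 := (le_abs_self _).trans (hC r hr)
    have h6 := abs_sub_abs_le_abs_sub (F r (c r y)) (F r (y₁ r))
    rw [Real.norm_eq_abs]
    refine le_trans ?_ (Real.le_coe_toNNReal C)
    simp only [Pi.add_apply, Pi.sub_apply] at h5
    linarith
  have hPL : IsPicardLindelof (fun r y => F r (c r y)) (tmin := 0) (tmax := l)
      ⟨l, hl.le, le_rfl⟩ (y₁ l) (C.toNNReal * l.toNNReal) 0 C.toNNReal K :=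
    { lipschitzOnWith := fun r hr => by
        simpa [Function.comp_def] using ((hK r hr).comp (hc_lip r)).lipschitzOnWith
      continuousOn := fun y _ => hFcomp _ (c₁.sup (c₂.inf continuousOn_const))
      norm_le := fun r hr y _ => hbound r hr y
      mul_max_le := by simp [hl.le] }
  obtain ⟨φ, hφl, hφ⟩ := hPL.exists_eq_forall_mem_Icc_hasDerivWithinAt₀
  have hlmem : l ∈ Icc (0:ℝ) l := ⟨hl.le, le_rfl⟩
  have hupper : ∀ r ∈ Icc (0:ℝ) l, φ r - y₂ r ≤ 0 := by
    refine nonpos_of_deriv_nonneg_of_pos (fun r hr => (hφ r hr).sub (hy₂ r hr)) ?_ ?_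
    · simpa [hφl] using hle l hlmem
    · intro r hr hpos
      have : c r (φ r) = y₂ r := by
        simp only [c]
        rw [min_eq_left (by linarith), max_eq_right (hle r hr)]
      rw [this]
      linarith [hsub r hr]
  have hlower : ∀ r ∈ Icc (0:ℝ) l, y₁ r - φ r ≤ 0 := by
    refine nonpos_of_deriv_nonneg_of_pos (fun r hr => (hy₁ r hr).sub (hφ r hr)) ?_ ?_
    · simp [hφl]
    · intro r hr hpos
      have : c r (φ r) = y₁ r := by
        simp only [c]
        rw [min_eq_right (by linarith [hle r hr]), max_eq_left (by linarith)]
      rw [this]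
      exact hsup r hr
  refine ⟨φ, fun r hr => ?_⟩
  have h1 := hlower r hr
  have h2 := hupper r hr
  have : c r (φ r) = φ r := by
    simp only [c]
    rw [min_eq_right (by linarith), max_eq_right (by linarith)]
  exact ⟨by simpa only [this] using hφ r hr, by linarith, by linarith⟩
end

section
/- Let F : [0,∞) × ℝ → ℝ be continuous and Lipschitz continuous in the second variable. Suppose y₁, y₂ : [0,∞) → ℝ are differentiable functions with y₁(r) ≤ y₂(r) for all r ≥ 0, and satisfying y₂'(r) − F(r, y₂(r)) ≤ 0 and y₁'(r) − F(r, y₁(r)) ≥ 0 for all r ≥ 0. Then there exists a differentiable function φ : [0,∞) → ℝ such that φ'(r) = F(r, φ(r)) and y₁(r) ≤ φ(r) ≤ y₂(r) for all r ≥ 0. -/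
/-!
Replace `F` by the field `G r y = F r (max (y₁ r) (min (y₂ r) y))`, obtained by truncating the
second variable to the strip between `y₁` and `y₂`. It is still `K`-Lipschitz in `y`, and it is
bounded on `[0, T] × ℝ` for every `T`, so Picard–Lindelöf applies on all of `[0, T]` in one step and
every initial value `c` has a unique global solution `φ c` (`exists_global_solution`), which
depends continuously on `c` (`dist_solution_le`).

By the comparison principle (`comparison`), a solution of `G` that lies above `y₂` at some time
stays above it afterwards, and one that lies below `y₁` stays below it. Let `c` be the least initial
value for which `φ c ≥ y₁` everywhere; the set of such values is closed, bounded below by `y₁ 0`, and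
contains `y₂ 0`. If `φ c` exceeded `y₂` at a time `t`, so would `φ c'` for some `c' < c`; then
`φ c'` would be above `y₂ ≥ y₁` after `t`, and could not have been below `y₁` before `t`,
contradicting the minimality of `c`. So `φ c` lies in the strip, where `G` and `F` agree.
-/

open Set

/-- Comparison principle: for a right-hand side Lipschitz in the second variable, a subsolution
`u` that starts below a supersolution `v` stays below it. -/
lemma comparison {G : ℝ → ℝ → ℝ} {K : NNReal}
    (hG : ∀ r ∈ Ici (0 : ℝ), LipschitzWith K (G r)) {u v u' v' : ℝ → ℝ} {a : ℝ} (ha : 0 ≤ a)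
    (hu : ∀ r ∈ Ici (0 : ℝ), HasDerivWithinAt u (u' r) (Ici 0) r)
    (hv : ∀ r ∈ Ici (0 : ℝ), HasDerivWithinAt v (v' r) (Ici 0) r)
    (hu' : ∀ r ∈ Ici (0 : ℝ), u' r ≤ G r (u r))
    (hv' : ∀ r ∈ Ici (0 : ℝ), G r (v r) ≤ v' r)
    (hauv : u a ≤ v a) {b : ℝ} (hab : a ≤ b) : u b ≤ v b := by
  -- The barrier `ε * exp ((K + 1) * (x - a))` grows strictly faster than `u - v` can where
  -- they meet, because `(u - v)' ≤ K * (u - v)` wherever `u ≥ v`.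
  have key : ∀ ε : ℝ, 0 < ε → u b - v b ≤ ε * Real.exp ((K + 1) * (b - a)) := by
    intro ε hε
    have hsub : Icc a b ⊆ Ici (0 : ℝ) := fun x hx => ha.trans hx.1
    refine image_le_of_deriv_right_lt_deriv_boundary (f := fun x => u x - v x)
      (f' := fun x => u' x - v' x) (a := a) (b := b)
      (B := fun x => ε * Real.exp ((K + 1) * (x - a)))
      (B' := fun x => ε * (Real.exp ((K + 1) * (x - a)) * ((K + 1) * 1)))
      ?_ ?_ ?_ ?_ ?_ (right_mem_Icc.2 hab)
    · intro x hx
      exact (((hu x (hsub hx)).sub (hv x (hsub hx))).continuousWithinAt).mono hsub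
    · intro x hx
      have hx0 : x ∈ Ici (0 : ℝ) := ha.trans hx.1
      exact ((hu x hx0).sub (hv x hx0)).mono (Ici_subset_Ici.2 hx0)
    · simp; linarith
    · intro x
      exact ((((hasDerivAt_id x).sub_const a).const_mul ((K : ℝ) + 1)).exp).const_mul ε
    · intro x hx heq
      have hx0 : x ∈ Ici (0 : ℝ) := ha.trans hx.1
      have hpos : 0 < ε * Real.exp ((K + 1) * (x - a)) := by positivity
      have hL := (hG x hx0).dist_le_mul (u x) (v x)
      rw [Real.dist_eq, Real.dist_eq, heq, abs_of_pos hpos] at hL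
      have h1 := le_of_abs_le hL
      have h2 := hu' x hx0
      have h3 := hv' x hx0
      have h4 : ε * (Real.exp ((K + 1) * (x - a)) * ((K + 1) * 1)) =
        K * (ε * Real.exp ((K + 1) * (x - a))) + ε * Real.exp ((K + 1) * (x - a)) := by ring
      rw [h4]
      linarith
  by_contra! hlt
  have hE := Real.exp_pos (((K : ℝ) + 1) * (b - a))
  have h := key ((u b - v b) / 2 / Real.exp ((K + 1) * (b - a)))
    (div_pos (by linarith) hE)
  rw [div_mul_cancel₀ _ hE.ne'] at h
  linarith

/-- Continuous dependence on the initial value; for equal initial values it is uniqueness. -/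
lemma dist_solution_le {G : ℝ → ℝ → ℝ} {K : NNReal}
    (hG : ∀ r ∈ Ici (0 : ℝ), LipschitzWith K (G r)) {u v : ℝ → ℝ} {T : ℝ}
    (hu : ∀ r ∈ Icc (0 : ℝ) T, HasDerivWithinAt u (G r (u r)) (Icc 0 T) r)
    (hv : ∀ r ∈ Icc (0 : ℝ) T, HasDerivWithinAt v (G r (v r)) (Icc 0 T) r)
    {t : ℝ} (ht : t ∈ Icc 0 T) :
    dist (u t) (v t) ≤ dist (u 0) (v 0) * Real.exp (K * t) := by
  have right : ∀ w : ℝ → ℝ, (∀ r ∈ Icc (0 : ℝ) T, HasDerivWithinAt w (G r (w r)) (Icc 0 T) r) →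
      ∀ r ∈ Ico (0 : ℝ) T, HasDerivWithinAt w (G r (w r)) (Ici r) r := fun w hw r hr =>
    (hw r (Ico_subset_Icc_self hr)).mono_of_mem_nhdsWithin (Icc_mem_nhdsGE_of_mem hr)
  have h := dist_le_of_trajectories_ODE_of_mem (v := G) (s := fun _ => univ) (K := K)
    (fun r hr => (hG r hr.1).lipschitzOnWith) (fun r hr => (hu r hr).continuousWithinAt)
    (right u hu) (fun _ _ => trivial) (fun r hr => (hv r hr).continuousWithinAt)
    (right v hv) (fun _ _ => trivial) le_rfl t ht
  rwa [sub_zero] at h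

/-- A field that is Lipschitz in `y` and bounded on every `[0, T] × ℝ` has a global solution for
every initial value. The bound lets the Picard–Lindelöf ball be as large as `[0, T]` requires, and
the solutions on the intervals `[0, n]` agree by uniqueness. -/
lemma exists_global_solution {G : ℝ → ℝ → ℝ} {K : NNReal}
    (hG : ∀ r ∈ Ici (0 : ℝ), LipschitzWith K (G r))
    (hcont : ∀ y, ContinuousOn (fun r => G r y) (Ici 0))
    (hbdd : ∀ T : ℝ, ∃ L : NNReal, ∀ r ∈ Icc (0 : ℝ) T, ∀ y, ‖G r y‖ ≤ L) (c : ℝ) :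
    ∃ φ : ℝ → ℝ, φ 0 = c ∧ ∀ r ∈ Ici (0 : ℝ), HasDerivWithinAt φ (G r (φ r)) (Ici 0) r := by
  have fin : ∀ n : ℕ, ∃ α : ℝ → ℝ, α 0 = c ∧
      ∀ r ∈ Icc (0 : ℝ) n, HasDerivWithinAt α (G r (α r)) (Icc 0 (n : ℝ)) r := by
    intro n
    obtain ⟨L, hL⟩ := hbdd n
    have hPL : IsPicardLindelof G (⟨0, le_rfl, n.cast_nonneg⟩ : Icc (0 : ℝ) n) c (L * n) 0 L K :=
      { lipschitzOnWith := fun r hr => (hG r hr.1).lipschitzOnWith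
        continuousOn := fun y _ => (hcont y).mono fun r hr => hr.1
        norm_le := fun r hr y _ => hL r hr y
        mul_max_le := by simp }
    exact hPL.exists_eq_forall_mem_Icc_hasDerivWithinAt₀
  choose α hα0 hα using fin
  have agree : ∀ m n : ℕ, ∀ t : ℝ, 0 ≤ t → t ≤ m → t ≤ n → α m t = α n t := by
    intro m n t h0 hm hn
    have restr : ∀ k : ℕ, t ≤ k →
        ∀ r ∈ Icc (0 : ℝ) t, HasDerivWithinAt (α k) (G r (α k r)) (Icc 0 t) r := fun k hk r hr =>
      (hα k r ⟨hr.1, hr.2.trans hk⟩).mono (Icc_subset_Icc_right hk)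
    have h := dist_solution_le hG (restr m hm) (restr n hn) (right_mem_Icc.2 h0)
    rw [hα0, hα0, dist_self, zero_mul] at h
    exact dist_le_zero.1 h
  refine ⟨fun t => α ⌈t⌉₊ t, by simp [hα0], fun r hr => ?_⟩
  obtain ⟨n, hn⟩ := exists_nat_gt r
  have heq : ∀ t ∈ Icc (0 : ℝ) n, α ⌈t⌉₊ t = α n t := fun t ht =>
    agree _ _ t ht.1 (Nat.le_ceil t) ht.2
  have hrn : r ∈ Icc (0 : ℝ) n := ⟨hr, hn.le⟩
  have h := (hα n r hrn).congr_of_mem heq hrn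
  rw [← heq r hrn] at h
  refine h.mono_of_mem_nhdsWithin ?_
  filter_upwards [self_mem_nhdsWithin, nhdsWithin_le_nhds (Iio_mem_nhds hn)] with t h1 h2
  exact ⟨h1, h2.le⟩

/-- Infinite-interval ODE squeeze lemma (Lemma 2.1, infinite case): between a
differentiable supersolution `y₁` and subsolution `y₂` of `y' = F(r, y)` on
`[0, ∞)` there is an exact global solution `φ`. -/
theorem odeSqueeze_infinite (F : ℝ → ℝ → ℝ)
    (hFcont : ContinuousOn (fun p : ℝ × ℝ => F p.1 p.2) (Ici 0 ×ˢ univ))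
    (hFlip : ∃ K : NNReal, ∀ r ∈ Ici (0:ℝ), LipschitzWith K (fun y => F r y))
    (y₁ y₂ d₁ d₂ : ℝ → ℝ)
    (hy₁ : ∀ r ∈ Ici (0:ℝ), HasDerivWithinAt y₁ (d₁ r) (Ici 0) r)
    (hy₂ : ∀ r ∈ Ici (0:ℝ), HasDerivWithinAt y₂ (d₂ r) (Ici 0) r)
    (hle : ∀ r ∈ Ici (0:ℝ), y₁ r ≤ y₂ r)
    (hsub : ∀ r ∈ Ici (0:ℝ), d₂ r - F r (y₂ r) ≤ 0)
    (hsup : ∀ r ∈ Ici (0:ℝ), 0 ≤ d₁ r - F r (y₁ r)) :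
    ∃ φ : ℝ → ℝ, ∀ r ∈ Ici (0:ℝ),
      HasDerivWithinAt φ (F r (φ r)) (Ici 0) r ∧ y₁ r ≤ φ r ∧ φ r ≤ y₂ r := by
  obtain ⟨K, hK⟩ := hFlip
  have hc₁ : ContinuousOn y₁ (Ici 0) := fun r hr => (hy₁ r hr).continuousWithinAt
  have hc₂ : ContinuousOn y₂ (Ici 0) := fun r hr => (hy₂ r hr).continuousWithinAt
  set G : ℝ → ℝ → ℝ := fun r y => F r (max (y₁ r) (min (y₂ r) y)) with hGdef
  have hGF : ∀ r y, y₁ r ≤ y → y ≤ y₂ r → G r y = F r y := fun r y h1 h2 => by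
    simp only [hGdef, min_eq_right h2, max_eq_right h1]
  have hG : ∀ r ∈ Ici (0 : ℝ), LipschitzWith K (G r) := fun r hr => by
    have h := (hK r hr).comp ((LipschitzWith.id.const_min (y₂ r)).const_max (y₁ r))
    rwa [mul_one] at h
  have hcont : ∀ y, ContinuousOn (fun r => G r y) (Ici 0) := fun y =>
    hFcont.comp (f := fun r => (r, max (y₁ r) (min (y₂ r) y)))
      (continuousOn_id.prodMk (hc₁.sup (hc₂.inf continuousOn_const)))
      fun r hr => ⟨hr, trivial⟩
  have hbdd : ∀ T : ℝ, ∃ L : NNReal, ∀ r ∈ Icc (0 : ℝ) T, ∀ y, ‖G r y‖ ≤ L := by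
    intro T
    have hT : Icc (0 : ℝ) T ⊆ Ici 0 := fun r hr => hr.1
    obtain ⟨m, hm⟩ := isCompact_Icc.bddBelow_image (hc₁.mono hT)
    obtain ⟨M, hM⟩ := isCompact_Icc.bddAbove_image (hc₂.mono hT)
    obtain ⟨L, hL⟩ := (isCompact_Icc.prod isCompact_Icc).exists_bound_of_continuousOn
      (hFcont.mono (prod_mono hT (subset_univ (Icc m M))))
    refine ⟨L.toNNReal, fun r hr y => ?_⟩
    have h1 : m ≤ y₁ r := hm (mem_image_of_mem _ hr)
    have h2 : y₂ r ≤ M := hM (mem_image_of_mem _ hr)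
    have h3 := hle r hr.1
    exact (hL (r, max (y₁ r) (min (y₂ r) y)) ⟨hr, h1.trans (le_max_left _ _),
      max_le (h3.trans h2) ((min_le_left _ _).trans h2)⟩).trans (Real.le_coe_toNNReal L)
  choose φ hφ0 hφ using exists_global_solution hG hcont hbdd
  have hd₁ : ∀ r ∈ Ici (0 : ℝ), G r (y₁ r) ≤ d₁ r := fun r hr => by
    rw [hGF r _ le_rfl (hle r hr)]; linarith [hsup r hr]
  have hd₂ : ∀ r ∈ Ici (0 : ℝ), d₂ r ≤ G r (y₂ r) := fun r hr => by
    rw [hGF r _ (hle r hr) le_rfl]; linarith [hsub r hr]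
  have above : ∀ c a b, 0 ≤ a → a ≤ b → y₂ a ≤ φ c a → y₂ b ≤ φ c b := fun c a b ha hab h =>
    comparison hG ha hy₂ (hφ c) hd₂ (fun _ _ => le_rfl) h hab
  have below : ∀ c a b, 0 ≤ a → a ≤ b → φ c a ≤ y₁ a → φ c b ≤ y₁ b := fun c a b ha hab h =>
    comparison hG ha (hφ c) hy₁ (fun _ _ => le_rfl) hd₁ h hab
  have hφcont : ∀ t, 0 ≤ t → Continuous fun c => φ c t := by
    intro t ht
    refine (LipschitzWith.of_dist_le_mul (K := (Real.exp (K * t)).toNNReal)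
      fun c c' => ?_).continuous
    have h := dist_solution_le hG (T := t)
      (fun r hr => (hφ c r hr.1).mono fun s hs => hs.1)
      (fun r hr => (hφ c' r hr.1).mono fun s hs => hs.1) (right_mem_Icc.2 ht)
    rwa [hφ0, hφ0, mul_comm, ← Real.coe_toNNReal _ (Real.exp_pos (K * t)).le] at h
  set U : Set ℝ := {c | ∀ t, 0 ≤ t → y₁ t ≤ φ c t} with hU
  have hUne : U.Nonempty := ⟨y₂ 0, fun t ht =>
    (hle t ht).trans (above _ 0 t le_rfl ht (hφ0 _).ge)⟩
  have hUbdd : BddBelow U := ⟨y₁ 0, fun c hc => (hc 0 le_rfl).trans (hφ0 c).le⟩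
  have hUclosed : IsClosed U := by
    simp only [hU, ofPred_forall]
    exact isClosed_iInter fun t => isClosed_iInter fun ht =>
      isClosed_le continuous_const (hφcont t ht)
  have hmem : sInf U ∈ U := hUclosed.csInf_mem hUne hUbdd
  have hupper : ∀ t, 0 ≤ t → φ (sInf U) t ≤ y₂ t := by
    intro t ht
    by_contra! hlt
    have hev : ∀ᶠ c in nhdsWithin (sInf U) (Iio (sInf U)), y₂ t < φ c t :=
      nhdsWithin_le_nhds ((hφcont t ht).continuousAt.eventually (lt_mem_nhds hlt))
    obtain ⟨c, hct, hc⟩ := (hev.and self_mem_nhdsWithin).exists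
    -- Such a `c` belongs to `U`: past `t` because `φ c` stays above `y₂`, before `t` because
    -- falling below `y₁` would be irreversible.
    refine hc.not_ge (csInf_le hUbdd fun s hs => ?_)
    rcases le_total t s with hts | hst
    · exact (hle s hs).trans (above c t s ht hts hct.le)
    · by_contra! hlow
      exact ((below c s t hs hst hlow.le).trans (hle t ht)).not_gt hct
  refine ⟨φ (sInf U), fun r hr => ⟨?_, hmem r hr, hupper r hr⟩⟩
  rw [← hGF r _ (hmem r hr) (hupper r hr)]
  exact hφ _ r hr
end

section
/- Let a < b be real numbers and let m : [a,b] → ℝ be a differentiable function satisfying the Riccati inequality m'(r) + m(r)² ≤ 0 for all r ∈ [a,b]. If m(a) < 0, then b < a − 1/m(a). -/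
/-!
Since `m' ≤ -m² ≤ 0`, `m` is antitone, hence stays below `m a < 0` and never vanishes. Therefore
`1 / m` is differentiable with derivative `-m' / m² ≥ 1`, so `1 / m r - r` is monotone. Comparing
its values at `a` and `b` gives `1 / m a - a ≤ 1 / m b - b < -b`.
-/

open Set

/-- Riccati blow-down: if `m' + m² ≤ 0` on `[a, b]` and `m a < 0`, then
`b < a - 1 / m a`. -/
theorem riccati_blowdown (a b : ℝ) (hab : a < b) (m m' : ℝ → ℝ)
    (hm : ∀ r ∈ Icc a b, HasDerivWithinAt m (m' r) (Icc a b) r)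
    (hric : ∀ r ∈ Icc a b, m' r + (m r) ^ 2 ≤ 0)
    (hma : m a < 0) :
    b < a - 1 / m a := by
  have ha : a ∈ Icc a b := left_mem_Icc.2 hab.le
  have hb : b ∈ Icc a b := right_mem_Icc.2 hab.le
  have hanti : AntitoneOn m (Icc a b) := by
    refine antitoneOn_of_hasDerivWithinAt_nonpos (f' := m') (convex_Icc a b)
      (fun r hr => (hm r hr).continuousWithinAt)
      (fun r hr => (hm r (interior_subset hr)).mono interior_subset) (fun r hr => ?_)
    linarith [hric r (interior_subset hr), sq_nonneg (m r)]
  have hneg : ∀ r ∈ Icc a b, m r < 0 := fun r hr => (hanti ha hr hr.1).trans_lt hma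
  have hd : ∀ r ∈ Icc a b, HasDerivWithinAt (fun r => (m r)⁻¹ - r)
      (-m' r / m r ^ 2 - 1) (Icc a b) r := fun r hr =>
    ((hm r hr).fun_inv (hneg r hr).ne).fun_sub (hasDerivWithinAt_id r _)
  have hmono : MonotoneOn (fun r => (m r)⁻¹ - r) (Icc a b) := by
    refine monotoneOn_of_hasDerivWithinAt_nonneg (convex_Icc a b)
      (fun r hr => (hd r hr).continuousWithinAt)
      (fun r hr => (hd r (interior_subset hr)).mono interior_subset) (fun r hr => ?_)
    have hr' := interior_subset hr
    rw [sub_nonneg, one_le_div (sq_pos_of_neg (hneg r hr'))]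
    linarith [hric r hr']
  have hle : (m a)⁻¹ - a ≤ (m b)⁻¹ - b := hmono ha hb hab.le
  have hlt : (m b)⁻¹ < 0 := inv_lt_zero.2 (hneg b hb)
  rw [one_div]
  linarith
end

section
/- Let m : (0,∞) → ℝ be differentiable and let q : (0,∞) → ℝ be continuous with q(r) ≥ 0 and m(r) ≥ 0 for all r > 0. Suppose m'(r) + m(r)² + q(r) ≤ 0 for all r > 0 and m(r) → +∞ as r → 0⁺. Then for every a > 0, the improper integral ∫ₐ^∞ q(r) dr ≤ 1/a. -/
/-!
Since `m' ≤ -m² - q`, two elementary integrations suffice.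

* If `m a > 0` then `m`, being nonincreasing, is positive on `(0, a]`, where `(1/m)' = -m'/m² ≥ 1`;
  integrating from `s` to `a` gives `1 / m a ≥ a - s` for every `s ∈ (0, a)`, hence `m a ≤ 1/a`
  (`riccati_le_inv`).
* Since `q ≤ -m'`, `∫ₐᵇ q ≤ m a - m b ≤ m a`; let `b → ∞`.
-/

open Set MeasureTheory Filter

/-- A nonnegative global subsolution of `m' + m² ≤ 0` on `(0, ∞)` lies below the comparison
solution `1/r`. -/
lemma riccati_le_inv {m m' : ℝ → ℝ} (hm0 : ∀ r > (0:ℝ), 0 ≤ m r)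
    (hd : ∀ r > (0:ℝ), HasDerivAt m (m' r) r)
    (hric : ∀ r > (0:ℝ), m' r + (m r) ^ 2 ≤ 0) {a : ℝ} (ha : 0 < a) :
    m a ≤ 1 / a := by
  rcases (hm0 a ha).eq_or_lt with h0 | hpos
  · rw [← h0]; positivity
  have hanti : AntitoneOn m (Ioi 0) := by
    refine antitoneOn_of_hasDerivWithinAt_nonpos (f' := m') (convex_Ioi 0)
      (fun r hr => (hd r hr).continuousAt.continuousWithinAt) ?_ ?_
    · intro r hr
      rw [interior_Ioi] at hr
      exact (hd r hr).hasDerivWithinAt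
    · intro r hr
      rw [interior_Ioi] at hr
      nlinarith [hric r hr, sq_nonneg (m r)]
  have hmpos : ∀ r ∈ Ioc 0 a, 0 < m r := fun r hr =>
    hpos.trans_le (hanti hr.1 ha hr.2)
  have hg : ∀ r ∈ Ioc 0 a, HasDerivAt (fun r => (m r)⁻¹ - r) (-m' r / (m r) ^ 2 - 1) r :=
    fun r hr => ((hd r hr.1).fun_inv (hmpos r hr).ne').sub (hasDerivAt_id r)
  have hmono : MonotoneOn (fun r => (m r)⁻¹ - r) (Ioc 0 a) := by
    refine monotoneOn_of_hasDerivWithinAt_nonneg (convex_Ioc 0 a)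
      (fun r hr => (hg r hr).continuousAt.continuousWithinAt)
      (fun r hr => (hg r (interior_subset hr)).hasDerivWithinAt) ?_
    intro r hr
    have hr := interior_subset hr
    have h2 : 0 < (m r) ^ 2 := pow_pos (hmpos r hr) 2
    rw [sub_nonneg, le_div_iff₀ h2]
    linarith [hric r hr.1]
  have key : a ≤ (m a)⁻¹ := by
    refine le_of_forall_pos_le_add fun ε hε => ?_
    -- compare `a` with a point `s ∈ (0, a]` satisfying `s ≤ ε`
    have hs : min ε a ∈ Ioc 0 a := ⟨lt_min hε ha, min_le_right _ _⟩
    have h1 := hmono hs ⟨ha, le_rfl⟩ hs.2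
    have h2 := inv_pos.2 (hmpos _ hs)
    have h3 := min_le_left ε a
    simp only at h1
    linarith
  rw [one_div]
  exact (le_inv_comm₀ ha hpos).1 key

/-- Inequality (2.8): if `m' + m² + q ≤ 0` on `(0, ∞)` with `m, q ≥ 0` and
`m` blows up at `0⁺`, then `∫ₐ^∞ q ≤ 1/a` for every `a > 0`. -/
theorem integral_q_le_inv (q m m' : ℝ → ℝ)
    (hqc : ContinuousOn q (Ioi 0))
    (hq0 : ∀ r > (0:ℝ), 0 ≤ q r)
    (hm0 : ∀ r > (0:ℝ), 0 ≤ m r)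
    (hm : ∀ r > (0:ℝ), HasDerivWithinAt m (m' r) (Ioi 0) r)
    (hric : ∀ r > (0:ℝ), m' r + (m r) ^ 2 + q r ≤ 0)
    (hblow : Tendsto m (nhdsWithin 0 (Ioi 0)) atTop) :
    ∀ a > (0:ℝ),
      ∫⁻ r in Ioi a, ENNReal.ofReal (q r) ≤ ENNReal.ofReal (1 / a) := by
  intro a ha
  have hd : ∀ r > (0:ℝ), HasDerivAt m (m' r) r := fun r hr =>
    (hm r hr).hasDerivAt (Ioi_mem_nhds hr)
  have hma : m a ≤ 1 / a :=
    riccati_le_inv hm0 hd (fun r hr => by linarith [hric r hr, hq0 r hr]) ha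
  have hfin : ∀ b, a ≤ b → ∫ r in a..b, q r ≤ 1 / a := by
    intro b hab
    have h := intervalIntegral.integral_le_sub_of_hasDeriv_right_of_le (g := fun r => -m r)
      (g' := fun r => -m' r) (φ := q) hab
      (fun r hr => (hd r (ha.trans_le hr.1)).neg.continuousAt.continuousWithinAt)
      (fun r hr => (hd r (ha.trans hr.1)).neg.hasDerivWithinAt)
      ((hqc.mono fun r hr => ha.trans_le hr.1).integrableOn_Icc)
      (fun r hr => by nlinarith [hric r (ha.trans hr.1), sq_nonneg (m r)])
    linarith [hm0 b (ha.trans_le hab)]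
  have hmeas : AEMeasurable (fun r => ENNReal.ofReal (q r)) (volume.restrict (Ioi a)) :=
    ((hqc.mono (Ioi_subset_Ioi ha.le)).aemeasurable measurableSet_Ioi).ennreal_ofReal
  refine le_of_tendsto ((aecover_Iic (μ := volume.restrict (Ioi a)) (l := atTop)
    (tendsto_id (α := ℝ))).lintegral_tendsto_of_countably_generated hmeas) ?_
  filter_upwards [eventually_ge_atTop a] with b hab
  rw [Measure.restrict_restrict measurableSet_Iic, inter_comm, Ioi_inter_Iic, id,
    ← ofReal_integral_eq_lintegral_ofReal]
  · rw [← intervalIntegral.integral_of_le hab]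
    exact ENNReal.ofReal_le_ofReal (hfin b hab)
  · exact ((hqc.mono fun r hr => ha.trans_le hr.1).integrableOn_Icc (a := a) (b := b)).mono_set
      Ioc_subset_Icc_self
  · filter_upwards [ae_restrict_mem measurableSet_Ioc] with r hr
    exact hq0 r (ha.trans hr.1)
end

section
/- Let I be an interval, let q : I → ℝ be continuous with q ≥ 0 on I, let m : I → ℝ be differentiable with m ≥ 0 and m'(r) + m(r)² + q(r) ≤ 0 on I, and let ψ : I → ℝ be differentiable with ψ > 0 on I. Then for all r ∈ I, the function u = 1/(ψ + m) satisfies u'(r) + ψ'(r)·u(r)² − q(r)/(ψ(r)² + q(r)) ≥ 0. -/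
/-!
With `u = 1/(ψ + m)` one has `u' = -(ψ' + m')/(ψ + m)²`, so the `ψ'` terms cancel and
`u' + ψ' u² = -m'/(ψ + m)² ≥ (m² + q)/(ψ + m)²` by the Riccati inequality. The last quotient is
at least `q/(ψ² + q)` because `(m² + q)(ψ² + q) - q(ψ + m)² = (mψ - q)²`.
-/

open Set

/-- The supersolution inequality (3.3): if `m' + m² + q ≤ 0` with `m ≥ 0`,
`q ≥ 0` and `ψ > 0` on an interval `I`, then `u = 1/(ψ + m)` satisfies
`u' + ψ'·u² − q/(ψ² + q) ≥ 0` on `I`. -/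
theorem supersolution_ineq (I : Set ℝ) (hI : I.OrdConnected)
    (q m m' ψ ψ' : ℝ → ℝ)
    (hqc : ContinuousOn q I)
    (hq0 : ∀ r ∈ I, 0 ≤ q r)
    (hm0 : ∀ r ∈ I, 0 ≤ m r)
    (hm : ∀ r ∈ I, HasDerivWithinAt m (m' r) I r)
    (hric : ∀ r ∈ I, m' r + (m r) ^ 2 + q r ≤ 0)
    (hψ : ∀ r ∈ I, HasDerivWithinAt ψ (ψ' r) I r)
    (hψ0 : ∀ r ∈ I, 0 < ψ r) :
    ∃ u' : ℝ → ℝ, ∀ r ∈ I,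
      HasDerivWithinAt (fun s => 1 / (ψ s + m s)) (u' r) I r ∧
      0 ≤ u' r + ψ' r * (1 / (ψ r + m r)) ^ 2 - q r / ((ψ r) ^ 2 + q r) := by
  refine ⟨fun r => -(ψ' r + m' r) / (ψ r + m r) ^ 2, fun r hr => ?_⟩
  have hψr := hψ0 r hr
  have hqr := hq0 r hr
  have hmr := hm0 r hr
  have hpos : 0 < ψ r + m r := by linarith
  constructor
  · simpa only [one_div] using! ((hψ r hr).add (hm r hr)).inv hpos.ne'
  · have hcancel : -(ψ' r + m' r) / (ψ r + m r) ^ 2 + ψ' r * (1 / (ψ r + m r)) ^ 2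
        = -m' r / (ψ r + m r) ^ 2 := by
      field_simp
      ring
    have hle : q r / ((ψ r) ^ 2 + q r) ≤ -m' r / (ψ r + m r) ^ 2 := by
      calc q r / ((ψ r) ^ 2 + q r) ≤ ((m r) ^ 2 + q r) / (ψ r + m r) ^ 2 := by
            rw [div_le_div_iff₀ (by positivity) (by positivity)]
            -- The difference of the two sides is exactly `(m ψ - q)²`.
            nlinarith [sq_nonneg (m r * ψ r - q r)]
        _ ≤ -m' r / (ψ r + m r) ^ 2 := by
            gcongr
            linarith [hric r hr]
    simp only
    rw [hcancel]
    linarith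
end

section
/- Let a ≥ 0, let q : [a,∞) → ℝ be continuous with q ≥ 0, let m : [a,∞) → ℝ be differentiable with m ≥ 0 and m'(r) + m(r)² + q(r) ≤ 0 for all r ≥ a, and let ψ : [a,∞) → ℝ be positive and continuously differentiable. Then there exists a differentiable function φ : [a,∞) → ℝ such that (1) φ'(r) + ψ'(r)·φ(r)² − q(r)/(ψ(r)² + q(r)) = 0 for all r ≥ a, and (2) ψ(r)/(ψ(r) + m(r)) ≤ ψ(r)·φ(r) ≤ 1 for all r ≥ a. -/
open Set

/-!
The constraint `ψ / (ψ + m) ≤ ψ φ ≤ 1` says `L ≤ φ ≤ U` with `L = 1 / (ψ + m)` and `U = 1 / ψ`.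
Write the equation as `φ' = G - ψ' φ²` with `G = q / (ψ² + q)`. Then `U' = -ψ' U² ≤ G - ψ' U²`,
so `U` is a subsolution, while the Riccati inequality together with
`q / (ψ² + q) ≤ (m² + q) / (ψ + m)²` (equivalent to `0 ≤ (m ψ - q)²`) makes `L` a supersolution.
Consequently the region between `L` and `U` is invariant *backwards* in time, and the solution has to
be constructed from infinity.

For every `b ≥ a` the equation is solved backwards on `[a, b]` from the value `U b`
(`exists_backward_solution`). There the unknown is clamped to `[L, U]` in the right-hand side, which
makes it bounded and globally Lipschitz; `nonpos_of_backward` shows that the clamping is never active.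
The same lemma shows that these solutions decrease with `b` (`backward_solution_anti`). Since they
are bounded below by `L`, they converge as `b → ∞`, and dominated convergence in the integral
equation shows that the limit is a solution on all of `[a, ∞)` (`exists_solution_between`).
-/

open Filter Topology MeasureTheory

/-! ### Backward comparison and solutions on compact intervals -/

/-- Backward comparison: a function that is nonpositive at the right end point and is nondecreasing
as long as it is positive is nonpositive everywhere. -/
lemma nonpos_of_backward {h h' : ℝ → ℝ} {s b : ℝ} (hsb : s ≤ b)
    (hc : ContinuousOn h (Icc s b))
    (hd : ∀ t ∈ Ico s b, HasDerivWithinAt h (h' t) (Ici t) t)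
    (hpos : ∀ t ∈ Ico s b, 0 < h t → 0 ≤ h' t) (hb : h b ≤ 0) : h s ≤ 0 := by
  by_contra! hs
  -- The slope `ε` is so small that the fence `-h s + ε (t - s)` stays negative on `[s, b]`.
  obtain ⟨ε, hε, hεb⟩ : ∃ ε > 0, ε * (b - s) < h s := by
    refine ⟨h s / (b - s + 1), by apply div_pos hs; linarith, ?_⟩
    rw [div_mul_eq_mul_div, div_lt_iff₀ (by linarith)]
    nlinarith
  have key := image_le_of_deriv_right_lt_deriv_boundary' (f := fun t => -h t)
    (f' := fun t => -h' t) (B := fun t => -h s + ε * (t - s)) (B' := fun _ => ε)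
    hc.neg (fun t ht => (hd t ht).neg) (by simp) (by fun_prop)
    (fun t _ => by
      simpa using (((hasDerivAt_id t).sub_const s).const_mul ε).const_add (-h s)
        |>.hasDerivWithinAt)
    (fun t ht heq => by
      have h1 : ε * (t - s) ≤ ε * (b - s) :=
        mul_le_mul_of_nonneg_left (by linarith [ht.2]) hε.le
      have h2 := hpos t ht (by linarith)
      linarith) (right_mem_Icc.2 hsb)
  linarith

lemma HasDerivWithinAt.Ici_of_Icc {f : ℝ → ℝ} {f' a b t : ℝ} (ht : t ∈ Ico a b)
    (h : HasDerivWithinAt f f' (Icc a b) t) : HasDerivWithinAt f f' (Ici t) t :=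
  h.mono_of_mem_nhdsWithin
    (mem_of_superset (Icc_mem_nhdsGE ht.2) (Icc_subset_Icc_left ht.1))

lemma abs_clamp_sub_clamp_le (l u x y : ℝ) :
    |max l (min x u) - max l (min y u)| ≤ |x - y| := by
  rw [max_comm l, max_comm l]
  refine (abs_max_sub_max_le_abs _ _ _).trans ?_
  simpa using abs_min_sub_min_le_max x u y u

/-- If `0 ≤ L ≤ U` are a super- and a subsolution of `x' = G - P x²`, the solution
on `[a, b]` with terminal value `U b` exists and stays between `L` and `U`. -/
lemma exists_backward_solution {P G L U L' U' : ℝ → ℝ} {a b : ℝ} (hab : a ≤ b)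
    (hP : ContinuousOn P (Icc a b)) (hG : ContinuousOn G (Icc a b))
    (hL0 : ∀ r ∈ Icc a b, 0 ≤ L r) (hLU : ∀ r ∈ Icc a b, L r ≤ U r)
    (hL : ∀ r ∈ Icc a b, HasDerivWithinAt L (L' r) (Icc a b) r)
    (hU : ∀ r ∈ Icc a b, HasDerivWithinAt U (U' r) (Icc a b) r)
    (hL' : ∀ r ∈ Icc a b, G r - P r * L r ^ 2 ≤ L' r)
    (hU' : ∀ r ∈ Icc a b, U' r ≤ G r - P r * U r ^ 2) :
    ∃ x : ℝ → ℝ, x b = U b ∧ (∀ r ∈ Icc a b, L r ≤ x r ∧ x r ≤ U r) ∧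
      ∀ r ∈ Icc a b, HasDerivWithinAt x (G r - P r * x r ^ 2) (Icc a b) r := by
  have hLc : ContinuousOn L (Icc a b) := fun r hr => (hL r hr).continuousWithinAt
  have hUc : ContinuousOn U (Icc a b) := fun r hr => (hU r hr).continuousWithinAt
  obtain ⟨CP, hCP⟩ := isCompact_Icc.exists_bound_of_continuousOn hP
  obtain ⟨CG, hCG⟩ := isCompact_Icc.exists_bound_of_continuousOn hG
  obtain ⟨B, hB⟩ := isCompact_Icc.exists_bound_of_continuousOn hUc
  simp only [Real.norm_eq_abs] at hCP hCG hB
  have ha : a ∈ Icc a b := left_mem_Icc.2 hab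
  have hCP0 : 0 ≤ CP := (abs_nonneg _).trans (hCP a ha)
  have hCG0 : 0 ≤ CG := (abs_nonneg _).trans (hCG a ha)
  have hB0 : 0 ≤ B := (abs_nonneg _).trans (hB a ha)
  set c : ℝ → ℝ → ℝ := fun t x => max (L t) (min x (U t)) with hc
  have hcb : ∀ t ∈ Icc a b, ∀ x, |c t x| ≤ B := by
    intro t ht x
    have h1 : c t x ≤ U t := max_le (hLU t ht) (min_le_right _ _)
    have h2 : L t ≤ c t x := le_max_left _ _
    rw [abs_of_nonneg ((hL0 t ht).trans h2)]
    exact h1.trans ((le_abs_self _).trans (hB t ht))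
  set F : ℝ → ℝ → ℝ := fun t x => G t - P t * c t x ^ 2 with hF
  have hPL : IsPicardLindelof F (tmin := a) (tmax := b) ⟨b, right_mem_Icc.2 hab⟩ (U b)
      ⟨(CG + CP * B ^ 2) * (b - a), mul_nonneg (by positivity) (by linarith)⟩ 0
      ⟨CG + CP * B ^ 2, by positivity⟩ ⟨CP * (2 * B), by positivity⟩ := by
    refine ⟨fun t ht => ?_, fun x _ => ?_, fun t ht x _ => ?_, ?_⟩
    · refine LipschitzOnWith.of_dist_le_mul fun x _ y _ => ?_
      rw [Real.dist_eq, Real.dist_eq]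
      change |F t x - F t y| ≤ CP * (2 * B) * |x - y|
      have e : F t x - F t y = -P t * ((c t x + c t y) * (c t x - c t y)) := by
        simp only [hF]; ring
      have hsum : |c t x + c t y| ≤ 2 * B :=
        (abs_add_le _ _).trans (by linarith [hcb t ht x, hcb t ht y])
      have hdiff : |c t x - c t y| ≤ |x - y| := abs_clamp_sub_clamp_le _ _ _ _
      rw [e, abs_mul, abs_mul, abs_neg, mul_assoc]
      exact mul_le_mul (hCP t ht) (mul_le_mul hsum hdiff (abs_nonneg _) (by positivity))
        (by positivity) hCP0
    · exact hG.sub (hP.mul ((hLc.sup (continuousOn_const.inf hUc)).pow 2))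
    · change |F t x| ≤ CG + CP * B ^ 2
      refine (abs_sub _ _).trans ?_
      rw [abs_mul, abs_pow]
      gcongr
      · exact hCG t ht
      · exact hCP t ht
      · exact hcb t ht x
    · change (CG + CP * B ^ 2) * max (b - b) (b - a) ≤ (CG + CP * B ^ 2) * (b - a) - 0
      rw [sub_self, max_eq_right (by linarith), sub_zero]
  obtain ⟨x, hxb, hx⟩ := hPL.exists_eq_forall_mem_Icc_hasDerivWithinAt₀
  replace hxb : x b = U b := hxb
  have hxc : ContinuousOn x (Icc a b) := fun r hr => (hx r hr).continuousWithinAt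
  have hxU : ∀ r ∈ Icc a b, x r ≤ U r := by
    intro r hr
    have hsub : Icc r b ⊆ Icc a b := Icc_subset_Icc_left hr.1
    have hsub' : Ico r b ⊆ Ico a b := Ico_subset_Ico_left hr.1
    have := nonpos_of_backward (h := fun t => x t - U t) (h' := fun t => F t (x t) - U' t) hr.2
      ((hxc.sub hUc).mono hsub)
      (fun t ht => (((hx t (hsub ⟨ht.1, ht.2.le⟩)).sub
        (hU t (hsub ⟨ht.1, ht.2.le⟩)))).Ici_of_Icc (hsub' ht))
      (fun t ht hpos => by
        have ht' := hsub ⟨ht.1, ht.2.le⟩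
        have e : c t (x t) = U t := by
          simp only [hc]
          rw [min_eq_right (by linarith), max_eq_right (hLU t ht')]
        simp only [hF, e]
        linarith [hU' t ht']) (by simp [hxb])
    simpa using this
  have hxL : ∀ r ∈ Icc a b, L r ≤ x r := by
    intro r hr
    have hsub : Icc r b ⊆ Icc a b := Icc_subset_Icc_left hr.1
    have hsub' : Ico r b ⊆ Ico a b := Ico_subset_Ico_left hr.1
    have := nonpos_of_backward (h := fun t => L t - x t) (h' := fun t => L' t - F t (x t)) hr.2
      ((hLc.sub hxc).mono hsub)
      (fun t ht => (((hL t (hsub ⟨ht.1, ht.2.le⟩)).sub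
        (hx t (hsub ⟨ht.1, ht.2.le⟩)))).Ici_of_Icc (hsub' ht))
      (fun t ht hpos => by
        have ht' := hsub ⟨ht.1, ht.2.le⟩
        have e : c t (x t) = L t := by
          simp only [hc]
          exact max_eq_left ((min_le_left _ _).trans (by linarith))
        simp only [hF, e]
        linarith [hL' t ht'])
      (by simpa [hxb] using hLU b (right_mem_Icc.2 hab))
    simpa using this
  refine ⟨x, hxb, fun r hr => ⟨hxL r hr, hxU r hr⟩, fun r hr => ?_⟩
  have e : c r (x r) = x r := by
    simp only [hc]
    rw [min_eq_left (hxU r hr), max_eq_right (hxL r hr)]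
  have := hx r hr
  simp only [hF, e] at this
  exact this

/-- Two solutions of `x' = G - P x²` keep their terminal order backwards in time: the difference
`d` satisfies `d' = -P (x + y) d`, so `exp (K t) d` is nondecreasing where it is positive,
once `K` bounds `P (x + y)`. -/
lemma backward_solution_anti {P G x y : ℝ → ℝ} {a b : ℝ} (hP : ContinuousOn P (Icc a b))
    (hx : ∀ r ∈ Icc a b, HasDerivWithinAt x (G r - P r * x r ^ 2) (Icc a b) r)
    (hy : ∀ r ∈ Icc a b, HasDerivWithinAt y (G r - P r * y r ^ 2) (Icc a b) r)
    (hb : y b ≤ x b) : ∀ r ∈ Icc a b, y r ≤ x r := by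
  intro r hr
  have hxc : ContinuousOn x (Icc a b) := fun r hr => (hx r hr).continuousWithinAt
  have hyc : ContinuousOn y (Icc a b) := fun r hr => (hy r hr).continuousWithinAt
  obtain ⟨K, hK⟩ := isCompact_Icc.exists_bound_of_continuousOn (hP.mul (hyc.add hxc))
  have hsub : Icc r b ⊆ Icc a b := Icc_subset_Icc_left hr.1
  have hsub' : Ico r b ⊆ Ico a b := Ico_subset_Ico_left hr.1
  have hexp : ∀ t, HasDerivAt (fun t => Real.exp (K * t)) (Real.exp (K * t) * K) t := fun t => by
    simpa using ((hasDerivAt_id t).const_mul K).exp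
  have := nonpos_of_backward (h := fun t => Real.exp (K * t) * (y t - x t)) hr.2
    ((ContinuousOn.mul (by fun_prop) (hyc.sub hxc)).mono hsub)
    (fun t ht => ((hexp t).hasDerivWithinAt.mul ((hy t (hsub ⟨ht.1, ht.2.le⟩)).sub
        (hx t (hsub ⟨ht.1, ht.2.le⟩)))).Ici_of_Icc (hsub' ht))
    (fun t ht hpos => by
      have h1 := (le_abs_self _).trans (hK t (hsub ⟨ht.1, ht.2.le⟩))
      have h2 : 0 < y t - x t := (mul_pos_iff_of_pos_left (Real.exp_pos _)).1 hpos
      have h3 : 0 ≤ Real.exp (K * t) * ((K - P t * (y t + x t)) * (y t - x t)) :=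
        mul_nonneg (Real.exp_pos _).le (mul_nonneg (by simpa using h1) h2.le)
      simp only [Pi.sub_apply]
      linarith) (mul_nonpos_of_nonneg_of_nonpos (Real.exp_pos _).le (by linarith))
  have := nonpos_of_mul_nonpos_right this (Real.exp_pos _)
  linarith

/-! ### Passage to the half-line -/

/-- If `0 ≤ L ≤ U` are a super- and a subsolution of `x' = G - P x²` on `[a, ∞)`, there is a
solution on `[a, ∞)` between them. -/
lemma exists_solution_between {P G L U L' U' : ℝ → ℝ} {a : ℝ}
    (hP : Continuous P) (hG : Continuous G)
    (hL0 : ∀ r ∈ Ici a, 0 ≤ L r) (hLU : ∀ r ∈ Ici a, L r ≤ U r)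
    (hL : ∀ r ∈ Ici a, HasDerivWithinAt L (L' r) (Ici a) r)
    (hU : ∀ r ∈ Ici a, HasDerivWithinAt U (U' r) (Ici a) r)
    (hL' : ∀ r ∈ Ici a, G r - P r * L r ^ 2 ≤ L' r)
    (hU' : ∀ r ∈ Ici a, U' r ≤ G r - P r * U r ^ 2) :
    ∃ φ : ℝ → ℝ, ∀ r ∈ Ici a, HasDerivWithinAt φ (G r - P r * φ r ^ 2) (Ici a) r ∧
      L r ≤ φ r ∧ φ r ≤ U r := by
  have hUc : ContinuousOn U (Ici a) := fun r hr => (hU r hr).continuousWithinAt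
  have han : ∀ n : ℕ, a ≤ a + n := fun n => by simp
  choose x hxb hxLU hx using fun n : ℕ =>
    exists_backward_solution (b := a + n) (han n) hP.continuousOn hG.continuousOn
      (fun r hr => hL0 r hr.1) (fun r hr => hLU r hr.1)
      (fun r hr => (hL r hr.1).mono Icc_subset_Ici_self)
      (fun r hr => (hU r hr.1).mono Icc_subset_Ici_self)
      (fun r hr => hL' r hr.1) (fun r hr => hU' r hr.1)
  have hxc : ∀ n, ContinuousOn (x n) (Icc a (a + n)) :=
    fun n r hr => (hx n r hr).continuousWithinAt
  -- `y n` extends `x n` continuously to `ℝ`, by `U` on the right and by a constant on the left.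
  let p : ℕ → ℝ → ℝ := fun n r => max a (min (a + n) r)
  have hpm : ∀ (n : ℕ) r, p n r ∈ Icc a (a + n) := fun n r =>
    ⟨le_max_left _ _, max_le (han n) (min_le_left _ _)⟩
  have hpc : ∀ n, Continuous (p n) := fun n => by fun_prop
  let y : ℕ → ℝ → ℝ := fun n r => x n (p n r) + (U (max a r) - U (p n r))
  have hmaxU : Continuous fun r => U (max a r) :=
    hUc.comp_continuous (by fun_prop) fun r => le_max_left a r
  have hyc : ∀ n, Continuous (y n) := fun n =>
    ((hxc n).comp_continuous (hpc n) (hpm n)).add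
      (hmaxU.sub (hUc.comp_continuous (hpc n) fun r => (hpm n r).1))
  have hy1 : ∀ n : ℕ, ∀ r ∈ Icc a (a + n), y n r = x n r := by
    intro n r hr
    simp only [y, p]
    rw [min_eq_right hr.2, max_eq_right hr.1]; ring
  have hy2 : ∀ (n : ℕ) r, a + n ≤ r → y n r = U r := by
    intro n r hr
    simp only [y, p]
    rw [min_eq_left hr, max_eq_right (han n), max_eq_right ((han n).trans hr), hxb]; ring
  have hyleft : ∀ n r, y n r = y n (max a r) := by
    intro n r
    rcases le_total a r with h | h
    · rw [max_eq_right h]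
    · rw [max_eq_left h]
      simp [y, p, h, h.trans (han n)]
  have hyLU : ∀ n, ∀ r ∈ Ici a, L r ≤ y n r ∧ y n r ≤ U r := by
    intro n r hr
    rcases le_total r (a + n) with h | h
    · rw [hy1 n r ⟨hr, h⟩]; exact hxLU n r ⟨hr, h⟩
    · rw [hy2 n r h]; exact ⟨hLU r hr, le_rfl⟩
  have hyanti : ∀ r ∈ Ici a, Antitone fun n => y n r := by
    intro r hr
    refine antitone_nat_of_succ_le fun n => ?_
    rcases le_total r (a + n) with h | h
    · have hle : a + (n : ℝ) ≤ a + (n + 1 : ℕ) := by simp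
      rw [hy1 n r ⟨hr, h⟩, hy1 (n + 1) r ⟨hr, h.trans hle⟩]
      refine backward_solution_anti hP.continuousOn (hx n)
        (fun r hr => (hx (n + 1) r ⟨hr.1, hr.2.trans hle⟩).mono (Icc_subset_Icc_right hle))
        ?_ r ⟨hr, h⟩
      rw [hxb]
      exact (hxLU (n + 1) _ ⟨han n, hle⟩).2
    · rw [hy2 n r h]; exact (hyLU _ r hr).2
  let φ : ℝ → ℝ := fun r => ⨅ n, y n r
  have hlim : ∀ r, Tendsto (fun n => y n r) atTop (𝓝 (φ r)) := by
    have : ∀ r ∈ Ici a, Tendsto (fun n => y n r) atTop (𝓝 (φ r)) := fun r hr =>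
      tendsto_atTop_ciInf (hyanti r hr) ⟨L r, by rintro _ ⟨n, rfl⟩; exact (hyLU n r hr).1⟩
    intro r
    have h := this (max a r) (mem_Ici.2 (le_max_left a r))
    simp only [φ, ← hyleft] at h
    exact h
  have hφLU : ∀ r ∈ Ici a, L r ≤ φ r ∧ φ r ≤ U r := fun r hr =>
    ⟨ge_of_tendsto' (hlim r) fun n => (hyLU n r hr).1,
      le_of_tendsto' (hlim r) fun n => (hyLU n r hr).2⟩
  have hφleft : ∀ r, φ r = φ (max a r) := fun r => by simp only [φ, ← hyleft]
  have hφm : Measurable φ :=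
    measurable_of_tendsto_metrizable (fun n => (hyc n).measurable) (tendsto_pi_nhds.2 hlim)
  let g : ℝ → ℝ := fun s => G s - P s * φ s ^ 2
  let bd : ℝ → ℝ := fun s => |G s| + |P s| * U (max a s) ^ 2
  have hbdc : Continuous bd := hG.abs.add (hP.abs.mul (hmaxU.pow 2))
  have hbound : ∀ s z, L (max a s) ≤ z → z ≤ U (max a s) → ‖G s - P s * z ^ 2‖ ≤ bd s := by
    intro s z h1 h2
    have h0 : 0 ≤ z := (hL0 _ (le_max_left a s)).trans h1
    refine (norm_sub_le _ _).trans ?_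
    rw [norm_mul, norm_pow, Real.norm_of_nonneg h0]
    simp only [Real.norm_eq_abs, bd]
    gcongr
  have hgint : ∀ u v, IntervalIntegrable g volume u v := fun u v =>
    (hbdc.intervalIntegrable u v).mono_fun'
      (hG.measurable.sub (hP.measurable.mul (hφm.pow_const 2))).aestronglyMeasurable
      (Eventually.of_forall fun s => by
        have := hφLU (max a s) (mem_Ici.2 (le_max_left a s))
        rw [← hφleft] at this
        exact hbound s _ this.1 this.2)
  have hinteq : ∀ r ∈ Ici a, φ r = φ a + ∫ s in a..r, g s := by
    intro r hr
    have h1 : Tendsto (fun n => ∫ s in a..r, (G s - P s * y n s ^ 2)) atTop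
        (𝓝 (∫ s in a..r, g s)) := by
      refine intervalIntegral.tendsto_integral_filter_of_dominated_convergence bd
        (Eventually.of_forall fun n => ?_) (Eventually.of_forall fun n => ?_)
        (hbdc.intervalIntegrable _ _) ?_
      · have := hyc n
        exact Continuous.aestronglyMeasurable (by fun_prop)
      · refine Eventually.of_forall fun s _ => ?_
        have := hyLU n (max a s) (mem_Ici.2 (le_max_left a s))
        rw [← hyleft] at this
        exact hbound s _ this.1 this.2
      · exact Eventually.of_forall fun s _ =>
          tendsto_const_nhds.sub (tendsto_const_nhds.mul ((hlim s).pow 2))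
    have h2 : ∀ᶠ n : ℕ in atTop, ∫ s in a..r, (G s - P s * y n s ^ 2) = y n r - y n a := by
      obtain ⟨N, hN⟩ := exists_nat_ge (r - a)
      filter_upwards [eventually_ge_atTop N] with n hn
      have hrn : r ≤ a + n := by
        have : (N : ℝ) ≤ n := by exact_mod_cast hn
        linarith
      have := hyc n
      refine intervalIntegral.integral_eq_sub_of_hasDeriv_right_of_le hr (hyc n).continuousOn
        (fun s hs => ?_) (Continuous.intervalIntegrable (by fun_prop) _ _)
      have hs' : s ∈ Icc a (a + n) := ⟨hs.1.le, hs.2.le.trans hrn⟩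
      have hd := (hx n s hs').congr (hy1 n) (hy1 n s hs')
      rw [← hy1 n s hs'] at hd
      exact (hd.Ici_of_Icc ⟨hs.1.le, hs.2.trans_le hrn⟩).mono Ioi_subset_Ici_self
    have h3 := tendsto_nhds_unique (h1.congr' h2) ((hlim r).sub (hlim a))
    rw [h3]; ring
  have hφc : Continuous φ := by
    have h := (intervalIntegral.continuous_primitive hgint a).comp
      (continuous_const.max continuous_id : Continuous fun r => max a r)
    refine (continuous_const.add h : Continuous fun r => φ a + _).congr fun r => ?_
    rw [hφleft r, hinteq _ (le_max_left a r)]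
    rfl
  have hgc : Continuous g := by fun_prop
  refine ⟨φ, fun r hr => ⟨?_, hφLU r hr⟩⟩
  exact (((hgc.integral_hasStrictDerivAt a r).hasDerivAt.const_add (φ a)).hasDerivWithinAt).congr
    hinteq (hinteq r hr)

/-! ### The barriers coming from the Riccati inequality -/

/-- Proposition 3.1: with `m ≥ 0`, `q ≥ 0` satisfying the Riccati inequality
`m' + m² + q ≤ 0` on `[a, ∞)` and `ψ > 0` continuously differentiable, there
is a solution `φ` of `φ' + ψ'·φ² − q/(ψ² + q) = 0` with
`ψ/(ψ + m) ≤ ψ·φ ≤ 1`. -/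
theorem exists_phi_ray (a : ℝ) (ha : 0 ≤ a) (q m m' ψ ψ' : ℝ → ℝ)
    (hqc : ContinuousOn q (Ici a))
    (hq0 : ∀ r ∈ Ici a, 0 ≤ q r)
    (hm0 : ∀ r ∈ Ici a, 0 ≤ m r)
    (hm : ∀ r ∈ Ici a, HasDerivWithinAt m (m' r) (Ici a) r)
    (hric : ∀ r ∈ Ici a, m' r + (m r) ^ 2 + q r ≤ 0)
    (hψ0 : ∀ r ∈ Ici a, 0 < ψ r)
    (hψ : ∀ r ∈ Ici a, HasDerivWithinAt ψ (ψ' r) (Ici a) r)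
    (hψ'c : ContinuousOn ψ' (Ici a)) :
    ∃ φ φd : ℝ → ℝ, ∀ r ∈ Ici a,
      HasDerivWithinAt φ (φd r) (Ici a) r ∧
      φd r + ψ' r * (φ r) ^ 2 - q r / ((ψ r) ^ 2 + q r) = 0 ∧
      ψ r / (ψ r + m r) ≤ ψ r * φ r ∧ ψ r * φ r ≤ 1 := by
  have hψm : ∀ r ∈ Ici a, 0 < ψ r + m r := fun r hr =>
    add_pos_of_pos_of_nonneg (hψ0 r hr) (hm0 r hr)
  have hψc : ContinuousOn ψ (Ici a) := fun r hr => (hψ r hr).continuousWithinAt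
  have hden : ∀ r ∈ Ici a, 0 < ψ r ^ 2 + q r := fun r hr =>
    add_pos_of_pos_of_nonneg (pow_pos (hψ0 r hr) 2) (hq0 r hr)
  -- The coefficients are extended to `ℝ` by constants to the left of `a`.
  have hmax : Continuous fun r => max a r := by fun_prop
  have hmem : ∀ r, max a r ∈ Ici a := fun r => le_max_left a r
  obtain ⟨φ, hφ⟩ := exists_solution_between (a := a)
    (P := fun r => ψ' (max a r))
    (G := fun r => q (max a r) / (ψ (max a r) ^ 2 + q (max a r)))
    (L := fun r => (ψ r + m r)⁻¹) (U := fun r => (ψ r)⁻¹)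
    (L' := fun r => -(ψ' r + m' r) / (ψ r + m r) ^ 2) (U' := fun r => -ψ' r / ψ r ^ 2)
    (hψ'c.comp_continuous hmax hmem)
    ((hqc.div ((hψc.pow 2).add hqc) fun r hr => (hden r hr).ne').comp_continuous hmax hmem)
    (fun r hr => (inv_pos.2 (hψm r hr)).le)
    (fun r hr => inv_anti₀ (hψ0 r hr) (by linarith [hm0 r hr]))
    (fun r hr => ((hψ r hr).add (hm r hr)).inv (hψm r hr).ne')
    (fun r hr => (hψ r hr).inv (hψ0 r hr).ne')
    (fun r hr => by
      simp only [max_eq_right (mem_Ici.1 hr)]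
      -- `(m² + q)(ψ² + q) - q (ψ + m)² = (m ψ - q)²`
      have h1 : q r / (ψ r ^ 2 + q r) ≤ -m' r / (ψ r + m r) ^ 2 := by
        rw [div_le_div_iff₀ (hden r hr) (pow_pos (hψm r hr) 2)]
        have := mul_le_mul_of_nonneg_right (hric r hr) (hden r hr).le
        nlinarith [sq_nonneg (m r * ψ r - q r)]
      have h2 : -(ψ' r + m' r) / (ψ r + m r) ^ 2
          = -m' r / (ψ r + m r) ^ 2 - ψ' r * (ψ r + m r)⁻¹ ^ 2 := by
        rw [inv_pow]; ring
      linarith)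
    (fun r hr => by
      simp only [max_eq_right (mem_Ici.1 hr)]
      have h1 : 0 ≤ q r / (ψ r ^ 2 + q r) := div_nonneg (hq0 r hr) (hden r hr).le
      have h2 : -ψ' r / ψ r ^ 2 = -(ψ' r * (ψ r)⁻¹ ^ 2) := by rw [inv_pow]; ring
      linarith)
  refine ⟨φ, _, fun r hr => ⟨(hφ r hr).1, ?_, ?_, ?_⟩⟩
  · simp only [max_eq_right (mem_Ici.1 hr)]; ring
  · rw [div_eq_mul_inv]
    exact mul_le_mul_of_nonneg_left (hφ r hr).2.1 (hψ0 r hr).le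
  · have := mul_le_mul_of_nonneg_left (hφ r hr).2.2 (hψ0 r hr).le
    rwa [mul_inv_cancel₀ (hψ0 r hr).ne'] at this
end

section
/- Let 0 ≤ a < b ≤ ∞, let q : [a,∞) → ℝ be continuous with q ≥ 0, let m : [a,∞) → ℝ be differentiable with m ≥ 0 and m'(r) + m(r)² + q(r) ≤ 0 for all r ≥ a, and let ψ : [a,∞) → ℝ be positive, continuously differentiable and non-decreasing. Then ∫ₐᵇ ψ(r)q(r)/(ψ(r)² + q(r)) dr ≤ m(a)/(ψ(a) + m(a)) ≤ 1. -/
/-!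
The function `F = m / (ψ + m)` takes values in `[0, 1]`. Since `m, ψ' ≥ 0`, the Riccati inequality
gives `-F' ≥ ψ (m² + q) / (ψ + m)²`, and the Cauchy–Schwarz bound `q (ψ + m)² ≤ (ψ² + q) (m² + q)`
turns this into `-F' ≥ ψ q / (ψ² + q)`. Integrating over `[a, c]` bounds the integral by
`F a - F c ≤ F a`; as `m'` need not be integrable, this step uses the one-sided form of the
fundamental theorem of calculus, which only asks for the lower bound to be integrable. Letting
`c → ∞` bounds the integral over `(a, ∞)`, and therefore over `(a, b)`.
-/

open Set MeasureTheory

/-- The pointwise bound `ψ q / (ψ² + q) ≤ -(m / (ψ + m))'`, with `s = ψ`, `p = ψ'`, `d = m'`;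
the right-hand side has the shape produced by the quotient rule. -/
lemma integrand_le_neg_deriv {s p x d q : ℝ} (hs : 0 < s) (hp : 0 ≤ p) (hx : 0 ≤ x) (hq : 0 ≤ q)
    (h : d + x ^ 2 + q ≤ 0) :
    s * q / (s ^ 2 + q) ≤ -((d * (s + x) - x * (p + d)) / (s + x) ^ 2) := by
  have h1 : s * q / (s ^ 2 + q) ≤ s * (x ^ 2 + q) / (s + x) ^ 2 := by
    rw [div_le_div_iff₀ (by positivity) (by positivity)]
    -- the difference of the two sides is `s * (x * s - q) ^ 2`
    nlinarith [mul_nonneg hs.le (sq_nonneg (x * s - q))]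
  refine h1.trans ?_
  rw [← neg_div]
  gcongr
  nlinarith [mul_nonneg hx hp, mul_nonneg hs.le (sub_nonneg.2 h)]

/-- Theorem 1.1 (non-decreasing `ψ`), with the sharper bound of Remark 1.2:
`∫ₐᵇ ψq/(ψ² + q) dr ≤ m(a)/(ψ(a) + m(a)) ≤ 1`, where `0 ≤ a < b ≤ ∞`. -/
theorem functional_le_one_monotone (a : ℝ) (ha : 0 ≤ a) (b : EReal)
    (hab : (a : EReal) < b)
    (q m m' ψ ψ' : ℝ → ℝ)
    (hqc : ContinuousOn q (Ici a))
    (hq0 : ∀ r ∈ Ici a, 0 ≤ q r)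
    (hm0 : ∀ r ∈ Ici a, 0 ≤ m r)
    (hm : ∀ r ∈ Ici a, HasDerivWithinAt m (m' r) (Ici a) r)
    (hric : ∀ r ∈ Ici a, m' r + (m r) ^ 2 + q r ≤ 0)
    (hψ0 : ∀ r ∈ Ici a, 0 < ψ r)
    (hψ : ∀ r ∈ Ici a, HasDerivWithinAt ψ (ψ' r) (Ici a) r)
    (hψ'c : ContinuousOn ψ' (Ici a))
    (hmono : MonotoneOn ψ (Ici a)) :
    (∫⁻ r in {r : ℝ | a < r ∧ (r : EReal) < b},
        ENNReal.ofReal (ψ r * q r / ((ψ r) ^ 2 + q r)))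
      ≤ ENNReal.ofReal (m a / (ψ a + m a)) ∧
    m a / (ψ a + m a) ≤ 1 := by
  have hpos : ∀ r ∈ Ici a, 0 < ψ r + m r := fun r hr =>
    add_pos_of_pos_of_nonneg (hψ0 r hr) (hm0 r hr)
  refine ⟨?_, div_le_one_of_le₀ (by linarith [hψ0 a self_mem_Ici]) (hpos a self_mem_Ici).le⟩
  have hψc : ContinuousOn ψ (Ici a) := fun r hr => (hψ r hr).continuousWithinAt
  have hmc : ContinuousOn m (Ici a) := fun r hr => (hm r hr).continuousWithinAt
  have hgc : ContinuousOn (fun r => ψ r * q r / ((ψ r) ^ 2 + q r)) (Ici a) :=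
    (hψc.mul hqc).div ((hψc.pow 2).add hqc) fun r hr =>
      (add_pos_of_pos_of_nonneg (pow_pos (hψ0 r hr) 2) (hq0 r hr)).ne'
  have hψ'0 : ∀ r ∈ Ici a, 0 ≤ ψ' r := fun r hr => by
    rw [← (hψ r hr).derivWithin (uniqueDiffOn_Ici a r hr)]
    exact hmono.derivWithin_nonneg
  have hFc : ContinuousOn (fun r => -(m r / (ψ r + m r))) (Ici a) :=
    (hmc.div (hψc.add hmc) fun r hr => (hpos r hr).ne').neg
  have key : ∀ c, a ≤ c → ∫⁻ r in Ioc a c, ENNReal.ofReal (ψ r * q r / ((ψ r) ^ 2 + q r))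
      ≤ ENNReal.ofReal (m a / (ψ a + m a)) := by
    intro c hc
    have hint : IntegrableOn (fun r => ψ r * q r / ((ψ r) ^ 2 + q r)) (Icc a c) :=
      (hgc.mono Icc_subset_Ici_self).integrableOn_Icc
    have hle := intervalIntegral.integral_le_sub_of_hasDeriv_right_of_le hc
      (hFc.mono Icc_subset_Ici_self)
      (fun r hr => ((((hm r hr.1.le).div ((hψ r hr.1.le).add (hm r hr.1.le))
        (hpos r hr.1.le).ne').neg).mono (Ioi_subset_Ici hr.1.le)))
      hint
      (fun r hr => integrand_le_neg_deriv (hψ0 r hr.1.le) (hψ'0 r hr.1.le) (hm0 r hr.1.le)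
        (hq0 r hr.1.le) (hric r hr.1.le))
    rw [intervalIntegral.integral_of_le hc] at hle
    rw [← ofReal_integral_eq_lintegral_ofReal (hint.mono_set Ioc_subset_Icc_self)]
    · refine ENNReal.ofReal_le_ofReal (hle.trans ?_)
      have : 0 ≤ m c / (ψ c + m c) := div_nonneg (hm0 c hc) (hpos c hc).le
      linarith
    · refine (ae_restrict_iff' measurableSet_Ioc).2 (Filter.Eventually.of_forall fun r hr => ?_)
      have h1 := hψ0 r hr.1.le
      have h2 := hq0 r hr.1.le
      simp only [Pi.zero_apply]
      positivity
  have hsub : {r : ℝ | a < r ∧ (r : EReal) < b} ⊆ ⋃ n : ℕ, Ioc a (a + n) := by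
    intro r hr
    obtain ⟨n, hn⟩ := exists_nat_ge (r - a)
    exact mem_iUnion.2 ⟨n, hr.1, by linarith⟩
  have hdir : Directed (· ⊆ ·) fun n : ℕ => Ioc a (a + n) :=
    Monotone.directed_le fun i j hij => Ioc_subset_Ioc_right (by gcongr)
  refine (lintegral_mono_set hsub).trans ?_
  rw [setLIntegral_iUnion_of_directed _ hdir]
  exact iSup_le fun n => key _ (by simp)
end

section
/- Let 0 ≤ a < b < ∞, let q : [a,b] → ℝ be continuous with q ≥ 0, let m : [a,b] → ℝ be differentiable with m ≥ 0 and m'(r) + m(r)² + q(r) ≤ 0 on [a,b], and let ψ : [a,b] → ℝ be positive and continuously differentiable. Define F = ∫ₐᵇ ψ(r)q(r)/(ψ(r)² + q(r)) dr if ψ is non-decreasing on [a,b], and F = ∫ₐᵇ ψ(r)q(r)/(ψ(r)² + q(r)) dr − (1/4)·log(ψ(a)/ψ(b)) if ψ is non-increasing on [a,b]. Then F < 1 and m(a) ≥ ψ(a)·F/(1 − F). -/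
open Set MeasureTheory

/-!
The proof studies the bounded quantity `x = m / (m + ψ) ∈ [0, 1)`. The Riccati inequality gives
`-x' ≥ ((m² + q) ψ + m ψ') / (m + ψ)²`, and `(m² + q)(ψ² + q) - q (m + ψ)² = (m ψ - q)² ≥ 0`
shows that the first part is at least `ψ q / (ψ² + q)`. The term `m ψ' / (m + ψ)²` is nonnegative
when `ψ` is non-decreasing, and at least `ψ' / (4 ψ)` when `ψ` is non-increasing, because
`4 m ψ ≤ (m + ψ)²`. Integrating, `F ≤ x(a) - x(b) ≤ x(a) = m(a) / (m(a) + ψ(a)) < 1`, and solving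
for `m(a)` gives the bound. Since `m'` need not be integrable, the integration uses the
one-sided fundamental theorem of calculus, where only the lower bound `ψ q / (ψ² + q)` of the
derivative has to be integrable.
-/

/-- Lower bound for `-x'`, where `x = m / (m + p)`, in terms of the values `m, m', p = ψ, p' = ψ'`
and `q` at a point. -/
lemma riccati_quotient_bound {m m' p p' q : ℝ} (hm : 0 ≤ m) (hp : 0 < p) (hq : 0 ≤ q)
    (h : m' + m ^ 2 + q ≤ 0) :
    p * q / (p ^ 2 + q) + m * p' / (m + p) ^ 2
      ≤ -((m' * (m + p) - m * (m' + p')) / (m + p) ^ 2) := by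
  have h1 : 0 < m + p := by positivity
  have h2 : 0 < p ^ 2 + q := by positivity
  have key : p * q / (p ^ 2 + q) ≤ (-m' * p) / (m + p) ^ 2 := by
    rw [div_le_div_iff₀ h2 (by positivity)]
    have e1 : q * (m + p) ^ 2 ≤ (m ^ 2 + q) * (p ^ 2 + q) := by
      nlinarith [sq_nonneg (m * p - q)]
    have e2 : (m ^ 2 + q) * (p ^ 2 + q) ≤ -m' * (p ^ 2 + q) :=
      mul_le_mul_of_nonneg_right (by linarith) h2.le
    have := mul_le_mul_of_nonneg_left (e1.trans e2) hp.le
    linarith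
  have e : -((m' * (m + p) - m * (m' + p')) / (m + p) ^ 2)
      = (-m' * p) / (m + p) ^ 2 + m * p' / (m + p) ^ 2 := by ring
  linarith

/-- The functional `F` of (1.1) on a finite interval satisfies `F < 1`, and
the mean-curvature lower bound (1.3): `m(a) ≥ ψ(a)·F/(1 − F)`. -/
theorem functional_lt_one_and_mean_curvature_bound (a b : ℝ) (ha : 0 ≤ a)
    (hab : a < b)
    (q m m' ψ ψ' : ℝ → ℝ) (F : ℝ)
    (hqc : ContinuousOn q (Icc a b))
    (hq0 : ∀ r ∈ Icc a b, 0 ≤ q r)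
    (hm0 : ∀ r ∈ Icc a b, 0 ≤ m r)
    (hm : ∀ r ∈ Icc a b, HasDerivWithinAt m (m' r) (Icc a b) r)
    (hric : ∀ r ∈ Icc a b, m' r + (m r) ^ 2 + q r ≤ 0)
    (hψ0 : ∀ r ∈ Icc a b, 0 < ψ r)
    (hψ : ∀ r ∈ Icc a b, HasDerivWithinAt ψ (ψ' r) (Icc a b) r)
    (hψ'c : ContinuousOn ψ' (Icc a b))
    (hF : (MonotoneOn ψ (Icc a b) ∧
            F = ∫ r in a..b, ψ r * q r / ((ψ r) ^ 2 + q r)) ∨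
          (AntitoneOn ψ (Icc a b) ∧
            F = (∫ r in a..b, ψ r * q r / ((ψ r) ^ 2 + q r))
                  - (1 / 4) * Real.log (ψ a / ψ b))) :
    F < 1 ∧ ψ a * F / (1 - F) ≤ m a := by
  have hd : ∀ r ∈ Icc a b, HasDerivWithinAt (fun r => -(m r / (m r + ψ r)))
      (-((m' r * (m r + ψ r) - m r * (m' r + ψ' r)) / (m r + ψ r) ^ 2)) (Icc a b) r := by
    intro r hr
    exact ((hm r hr).div ((hm r hr).add (hψ r hr))
      (add_pos_of_nonneg_of_pos (hm0 r hr) (hψ0 r hr)).ne').neg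
  have hψc : ContinuousOn ψ (Icc a b) := fun r hr => (hψ r hr).continuousWithinAt
  have hφ : IntegrableOn (fun r => ψ r * q r / ((ψ r) ^ 2 + q r)) (Icc a b) := by
    apply ContinuousOn.integrableOn_Icc
    refine (hψc.mul hqc).div ((hψc.pow 2).add hqc) fun r hr => ?_
    have := hψ0 r hr
    have := hq0 r hr
    positivity
  have hright : ∀ r ∈ Ioo a b, Icc a b ∈ nhdsWithin r (Ioi r) := fun r hr =>
    mem_nhdsWithin_of_mem_nhds (Icc_mem_nhds hr.1 hr.2)
  have hat : a ∈ Icc a b := left_mem_Icc.2 hab.le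
  have hbt : b ∈ Icc a b := right_mem_Icc.2 hab.le
  have hxb : 0 ≤ m b / (m b + ψ b) :=
    div_nonneg (hm0 b hbt) (add_nonneg (hm0 b hbt) (hψ0 b hbt).le)
  have hFx : F ≤ m a / (m a + ψ a) := by
    rcases hF with ⟨hmono, rfl⟩ | ⟨hanti, rfl⟩
    · have := intervalIntegral.integral_le_sub_of_hasDeriv_right_of_le hab.le
        (fun r hr => (hd r hr).continuousWithinAt)
        (fun r hr => (hd r (Ioo_subset_Icc_self hr)).mono_of_mem_nhdsWithin (hright r hr)) hφ
        (fun r hr' => by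
          have hr := Ioo_subset_Icc_self hr'
          have hp' : 0 ≤ ψ' r := by
            rw [← (hψ r hr).derivWithin (uniqueDiffOn_Icc hab r hr)]
            exact hmono.derivWithin_nonneg
          have := riccati_quotient_bound (p' := ψ' r) (hm0 r hr) (hψ0 r hr) (hq0 r hr) (hric r hr)
          have := div_nonneg (mul_nonneg (hm0 r hr) hp') (sq_nonneg (m r + ψ r))
          linarith)
      linarith
    · have hd2 : ∀ r ∈ Icc a b, HasDerivWithinAt
          (fun r => -(m r / (m r + ψ r)) - 1 / 4 * Real.log (ψ r))
          (-((m' r * (m r + ψ r) - m r * (m' r + ψ' r)) / (m r + ψ r) ^ 2)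
            - 1 / 4 * (ψ' r / ψ r)) (Icc a b) r := fun r hr =>
        (hd r hr).sub (((hψ r hr).log (hψ0 r hr).ne').const_mul _)
      have := intervalIntegral.integral_le_sub_of_hasDeriv_right_of_le hab.le
        (fun r hr => (hd2 r hr).continuousWithinAt)
        (fun r hr => (hd2 r (Ioo_subset_Icc_self hr)).mono_of_mem_nhdsWithin (hright r hr)) hφ
        (fun r hr' => by
          have hr := Ioo_subset_Icc_self hr'
          have hp' : ψ' r ≤ 0 := by
            rw [← (hψ r hr).derivWithin (uniqueDiffOn_Icc hab r hr)]
            exact hanti.derivWithin_nonpos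
          have hb := riccati_quotient_bound (p' := ψ' r) (hm0 r hr) (hψ0 r hr) (hq0 r hr)
            (hric r hr)
          have h0 := hψ0 r hr
          have h1 := hm0 r hr
          have hle : 1 / 4 * (ψ' r / ψ r) ≤ m r * ψ' r / (m r + ψ r) ^ 2 := by
            have e : 1 / 4 * (ψ' r / ψ r) = ψ' r / (4 * ψ r) := by field_simp
            rw [e, div_le_div_iff₀ (by positivity) (by positivity)]
            nlinarith [mul_nonneg (neg_nonneg.2 hp') (sq_nonneg (m r - ψ r))]
          linarith)
      rw [Real.log_div (hψ0 a hat).ne' (hψ0 b hbt).ne']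
      linarith
  have hma := hm0 a hat
  have hψa := hψ0 a hat
  have hF1 : F < 1 := hFx.trans_lt ((div_lt_one (by positivity)).2 (by linarith))
  refine ⟨hF1, ?_⟩
  rw [le_div_iff₀ (by positivity)] at hFx
  rw [div_le_iff₀ (by linarith)]
  linarith
end

section
/- Let 0 ≤ ζ < ρ < ∞, let q : [ζ,ρ] → ℝ be continuous with q ≥ 0, let m : [ζ,ρ] → ℝ be differentiable with m ≤ 0 and m'(r) + m(r)² + q(r) ≤ 0 on [ζ,ρ], and let ψ : [ζ,ρ] → ℝ be positive and continuously differentiable. Then there exists a differentiable function φ : [ζ,ρ] → ℝ such that (1) φ'(r) + ψ'(r)·φ(r)² + q(r)/(ψ(r)² + q(r)) = 0 for all r ∈ [ζ,ρ], and (2) 1/(ψ(r) − m(r)) ≤ φ(r) ≤ 1/ψ(r) for all r ∈ [ζ,ρ]. -/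
open Set

/-!
Write `F r y = -ψ'(r) y² - q / (ψ² + q)` for the right-hand side of the equation.  The function
`1/ψ` is a supersolution of `y' = F r y`, because `q / (ψ² + q) ≥ 0`, and `1/(ψ - m)` is a
subsolution: this reduces to `q (ψ - m)² ≤ (m² + q) (ψ² + q)`, an instance of Cauchy-Schwarz, and
to the Riccati inequality.  Moreover `0 < 1/(ψ - m) ≤ 1/ψ`, because `m ≤ 0`.  The solution that
starts at `1/ψ(ζ)` is therefore trapped between the two.

To avoid blow-up a priori, `y²` is first replaced by the bounded Lipschitz function
`clampSq M y`, where `M` bounds `1/ψ`.  The Picard-Lindelöf theorem then gives a solution on all of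
`[ζ, ρ]` (`exists_solution_clampSq`), the Gronwall-type lemma `nonpos_of_deriv_le_mul_abs` gives the
two bounds, and these show that the truncation is never active.
-/

/-- The square of `y` truncated to the interval `[0, M]`. -/
noncomputable def clampSq (M y : ℝ) : ℝ := (max 0 (min y M)) ^ 2

lemma clampSq_of_mem {M y : ℝ} (h0 : 0 ≤ y) (hM : y ≤ M) : clampSq M y = y ^ 2 := by
  rw [clampSq, min_eq_left hM, max_eq_right h0]

lemma abs_clampSq_le {M : ℝ} (hM : 0 ≤ M) (y : ℝ) : |clampSq M y| ≤ M ^ 2 := by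
  rw [clampSq, abs_of_nonneg (sq_nonneg _)]
  exact pow_le_pow_left₀ (le_max_left _ _) (max_le hM (min_le_right _ _)) 2

lemma abs_clampSq_sub_le {M : ℝ} (hM : 0 ≤ M) (x y : ℝ) :
    |clampSq M x - clampSq M y| ≤ 2 * M * |x - y| := by
  have key : |max 0 (min x M) - max 0 (min y M)| ≤ |x - y| := by
    refine (abs_max_sub_max_le_max 0 (min x M) 0 (min y M)).trans (max_le (by simp) ?_)
    exact (abs_min_sub_min_le_max x M y M).trans (max_le le_rfl (by simp))
  have h1 : (0 : ℝ) ≤ max 0 (min x M) := le_max_left _ _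
  have h2 : (0 : ℝ) ≤ max 0 (min y M) := le_max_left _ _
  have h3 : max 0 (min x M) ≤ M := max_le hM (min_le_right _ _)
  have h4 : max 0 (min y M) ≤ M := max_le hM (min_le_right _ _)
  rw [clampSq, clampSq, sq_sub_sq, abs_mul, abs_of_nonneg (add_nonneg h1 h2)]
  exact mul_le_mul (by linarith) key (abs_nonneg _) (by linarith)

/-- One-sided Gronwall lemma: a function with nonpositive initial value and `w' ≤ K |w|` stays
nonpositive.  It is fenced below `ε exp ((K + 1) (x - a))` for every `ε > 0`. -/
lemma nonpos_of_deriv_le_mul_abs {a b K : ℝ} {w w' : ℝ → ℝ}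
    (hw : ∀ x ∈ Icc a b, HasDerivWithinAt w (w' x) (Icc a b) x) (ha : w a ≤ 0)
    (hK : ∀ x ∈ Icc a b, w' x ≤ K * |w x|) : ∀ x ∈ Icc a b, w x ≤ 0 := by
  have fence : ∀ ε > 0, ∀ x ∈ Icc a b, w x ≤ ε * Real.exp ((K + 1) * (x - a)) := by
    intro ε hε
    have hB : ∀ x : ℝ, HasDerivAt (fun x => ε * Real.exp ((K + 1) * (x - a)))
        (ε * (Real.exp ((K + 1) * (x - a)) * ((K + 1) * 1))) x := fun x =>
      ((((hasDerivAt_id x).sub_const a).const_mul (K + 1)).exp).const_mul ε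
    refine image_le_of_deriv_right_lt_deriv_boundary' (f' := w')
      (fun x hx => (hw x hx).continuousWithinAt) (fun x hx => ?_) ?_
      (fun x _ => (hB x).continuousAt.continuousWithinAt)
      (fun x _ => (hB x).hasDerivWithinAt) (fun x hx heq => ?_)
    · exact (hw x (Ico_subset_Icc_self hx)).mono_of_mem_nhdsWithin
        (Icc_mem_nhdsGE_of_mem hx)
    · simpa using ha.trans hε.le
    · have hpos : 0 < ε * Real.exp ((K + 1) * (x - a)) := mul_pos hε (Real.exp_pos _)
      have h := hK x (Ico_subset_Icc_self hx)
      rw [heq, abs_of_pos hpos] at h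
      linarith
  intro x hx
  have hE : 0 < Real.exp ((K + 1) * (x - a)) := Real.exp_pos _
  refine le_of_forall_pos_le_add fun δ hδ => ?_
  have h := fence (δ / Real.exp ((K + 1) * (x - a))) (div_pos hδ hE) x hx
  rw [div_mul_cancel₀ _ hE.ne'] at h
  linarith

/-- Global solvability of the truncated equation: its right-hand side is bounded, so
Picard-Lindelöf applies on the whole interval with a large enough ball. -/
lemma exists_solution_clampSq {a b M : ℝ} (hab : a ≤ b) (hM : 0 ≤ M) {p h : ℝ → ℝ}
    (hp : ContinuousOn p (Icc a b)) (hh : ContinuousOn h (Icc a b)) (x₀ : ℝ) :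
    ∃ φ : ℝ → ℝ, φ a = x₀ ∧ ∀ t ∈ Icc a b,
      HasDerivWithinAt φ (-(p t * clampSq M (φ t)) - h t) (Icc a b) t := by
  obtain ⟨P, hP⟩ := isCompact_Icc.exists_bound_of_continuousOn hp
  obtain ⟨H, hH⟩ := isCompact_Icc.exists_bound_of_continuousOn hh
  have hP0 : 0 ≤ P := (norm_nonneg _).trans (hP a ⟨le_rfl, hab⟩)
  have hH0 : 0 ≤ H := (norm_nonneg _).trans (hH a ⟨le_rfl, hab⟩)
  have hL : 0 ≤ P * M ^ 2 + H := by positivity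
  have hba : 0 ≤ b - a := sub_nonneg.2 hab
  have hf : IsPicardLindelof (fun t y => -(p t * clampSq M y) - h t)
      (⟨a, le_rfl, hab⟩ : Icc a b) x₀ ⟨(P * M ^ 2 + H) * (b - a), mul_nonneg hL hba⟩ 0
      ⟨P * M ^ 2 + H, hL⟩ ⟨P * (2 * M), by positivity⟩ := by
    refine ⟨fun t ht => ?_, fun x _ => ?_, fun t ht x _ => ?_, ?_⟩
    · refine LipschitzOnWith.of_dist_le_mul fun x _ y _ => ?_
      rw [Real.dist_eq, Real.dist_eq]
      have e : -(p t * clampSq M x) - h t - (-(p t * clampSq M y) - h t)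
          = -(p t * (clampSq M x - clampSq M y)) := by ring
      rw [e, abs_neg, abs_mul]
      calc |p t| * |clampSq M x - clampSq M y| ≤ P * (2 * M * |x - y|) :=
            mul_le_mul (hP t ht) (abs_clampSq_sub_le hM x y) (abs_nonneg _) hP0
        _ = P * (2 * M) * |x - y| := by ring
    · exact ((hp.mul continuousOn_const).neg).sub hh
    · refine (norm_sub_le _ _).trans (add_le_add ?_ (hH t ht))
      rw [norm_neg, norm_mul]
      exact mul_le_mul (hP t ht) (abs_clampSq_le hM x) (norm_nonneg _) hP0
    · simp only [sub_self, max_eq_left hba, NNReal.coe_zero, sub_zero]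
      exact le_rfl
  exact hf.exists_eq_forall_mem_Icc_hasDerivWithinAt₀

/-- Existence step in the proof of Theorem 1.4 past the mean convex radius:
with `m ≤ 0`, `q ≥ 0` satisfying `m' + m² + q ≤ 0` on `[ζ, ρ]` and `ψ > 0`
continuously differentiable, there is a solution `φ` of
`φ' + ψ'·φ² + q/(ψ² + q) = 0` with `1/(ψ − m) ≤ φ ≤ 1/ψ`. -/
theorem exists_phi_past_convex_radius (ζ ρ : ℝ) (hζ : 0 ≤ ζ) (hζρ : ζ < ρ)
    (q m m' ψ ψ' : ℝ → ℝ)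
    (hqc : ContinuousOn q (Icc ζ ρ))
    (hq0 : ∀ r ∈ Icc ζ ρ, 0 ≤ q r)
    (hm0 : ∀ r ∈ Icc ζ ρ, m r ≤ 0)
    (hm : ∀ r ∈ Icc ζ ρ, HasDerivWithinAt m (m' r) (Icc ζ ρ) r)
    (hric : ∀ r ∈ Icc ζ ρ, m' r + (m r) ^ 2 + q r ≤ 0)
    (hψ0 : ∀ r ∈ Icc ζ ρ, 0 < ψ r)
    (hψ : ∀ r ∈ Icc ζ ρ, HasDerivWithinAt ψ (ψ' r) (Icc ζ ρ) r)
    (hψ'c : ContinuousOn ψ' (Icc ζ ρ)) :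
    ∃ φ φd : ℝ → ℝ, ∀ r ∈ Icc ζ ρ,
      HasDerivWithinAt φ (φd r) (Icc ζ ρ) r ∧
      φd r + ψ' r * (φ r) ^ 2 + q r / ((ψ r) ^ 2 + q r) = 0 ∧
      1 / (ψ r - m r) ≤ φ r ∧ φ r ≤ 1 / ψ r := by
  have hden : ∀ r ∈ Icc ζ ρ, 0 < (ψ r) ^ 2 + q r := fun r hr =>
    add_pos_of_pos_of_nonneg (pow_pos (hψ0 r hr) 2) (hq0 r hr)
  have hψc : ContinuousOn ψ (Icc ζ ρ) := fun r hr => (hψ r hr).continuousWithinAt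
  have hhc : ContinuousOn (fun r => q r / ((ψ r) ^ 2 + q r)) (Icc ζ ρ) :=
    hqc.div ((hψc.pow 2).add hqc) fun r hr => (hden r hr).ne'
  have hζmem : ζ ∈ Icc ζ ρ := ⟨le_rfl, hζρ.le⟩
  obtain ⟨P, hP⟩ := isCompact_Icc.exists_bound_of_continuousOn hψ'c
  have hP0 : 0 ≤ P := (norm_nonneg _).trans (hP ζ hζmem)
  obtain ⟨M, hMb⟩ := isCompact_Icc.exists_bound_of_continuousOn
    (hψc.inv₀ fun r hr => (hψ0 r hr).ne')
  have hM0 : 0 ≤ M := (norm_nonneg _).trans (hMb ζ hζmem)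
  have huM : ∀ r ∈ Icc ζ ρ, (ψ r)⁻¹ ≤ M := fun r hr => (le_abs_self _).trans (hMb r hr)
  have hψm : ∀ r ∈ Icc ζ ρ, 0 < ψ r - m r := fun r hr => by
    linarith [hψ0 r hr, hm0 r hr]
  have hlu : ∀ r ∈ Icc ζ ρ, (ψ r - m r)⁻¹ ≤ (ψ r)⁻¹ := fun r hr =>
    inv_anti₀ (hψ0 r hr) (by linarith [hm0 r hr])
  obtain ⟨φ, hφζ, hφ⟩ := exists_solution_clampSq hζρ.le hM0 hψ'c hhc (ψ ζ)⁻¹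
  have hlip : ∀ r ∈ Icc ζ ρ, ∀ x y : ℝ,
      -(ψ' r * (clampSq M x - clampSq M y)) ≤ P * (2 * M) * |x - y| := by
    intro r hr x y
    refine (neg_le_abs _).trans ?_
    rw [abs_mul, mul_assoc]
    exact mul_le_mul (hP r hr) (abs_clampSq_sub_le hM0 x y) (abs_nonneg _) hP0
  have hupper : ∀ r ∈ Icc ζ ρ, φ r ≤ (ψ r)⁻¹ := by
    have := nonpos_of_deriv_le_mul_abs (K := P * (2 * M))
      (fun r hr => (hφ r hr).sub ((hψ r hr).inv (hψ0 r hr).ne')) (by simp [hφζ]) ?_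
    · exact fun r hr => sub_nonpos.1 (this r hr)
    · intro r hr
      have h1 := hlip r hr (φ r) (ψ r)⁻¹
      rw [clampSq_of_mem (inv_pos.2 (hψ0 r hr)).le (huM r hr)] at h1
      have h2 : 0 ≤ q r / ((ψ r) ^ 2 + q r) := div_nonneg (hq0 r hr) (hden r hr).le
      have e : -ψ' r / (ψ r) ^ 2 = -(ψ' r * (ψ r)⁻¹ ^ 2) := by
        rw [inv_pow]; ring
      simp only [Pi.sub_apply, Pi.inv_apply]
      rw [e]
      linarith
  have hlower : ∀ r ∈ Icc ζ ρ, (ψ r - m r)⁻¹ ≤ φ r := by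
    have := nonpos_of_deriv_le_mul_abs (K := P * (2 * M))
      (fun r hr => (((hψ r hr).sub (hm r hr)).inv (hψm r hr).ne').sub (hφ r hr)) ?_ ?_
    · exact fun r hr => sub_nonpos.1 (this r hr)
    · simpa [hφζ] using hlu ζ hζmem
    · intro r hr
      have h1 := hlip r hr (ψ r - m r)⁻¹ (φ r)
      rw [clampSq_of_mem (inv_pos.2 (hψm r hr)).le ((hlu r hr).trans (huM r hr))] at h1
      have h2 : q r / ((ψ r) ^ 2 + q r) ≤ -m' r / (ψ r - m r) ^ 2 := by
        rw [div_le_div_iff₀ (hden r hr) (pow_pos (hψm r hr) 2)]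
        -- Cauchy-Schwarz in the form `(m² + q)(ψ² + q) - q (ψ - m)² = (q + m ψ)²`
        nlinarith [sq_nonneg (q r + m r * ψ r),
          mul_nonneg (sub_nonneg.2 (hric r hr)) (hden r hr).le]
      have e : -(ψ' r - m' r) / (ψ r - m r) ^ 2
          = -(ψ' r * (ψ r - m r)⁻¹ ^ 2) - -m' r / (ψ r - m r) ^ 2 := by
        rw [inv_pow]; ring
      simp only [Pi.sub_apply, Pi.inv_apply]
      rw [e]
      linarith
  refine ⟨φ, _, fun r hr => ⟨hφ r hr, ?_, ?_, ?_⟩⟩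
  · rw [clampSq_of_mem ((inv_pos.2 (hψm r hr)).le.trans (hlower r hr))
      ((hupper r hr).trans (huM r hr))]
    ring
  · rw [one_div]; exact hlower r hr
  · rw [one_div]; exact hupper r hr
end

section
/- Let 0 ≤ ζ < ρ < ∞, let q : [ζ,ρ] → ℝ be continuous with q ≥ 0, let m : [ζ,ρ] → ℝ be differentiable with m ≤ 0 and m'(r) + m(r)² + q(r) ≤ 0 on [ζ,ρ], and let ψ : [ζ,ρ] → ℝ be positive and continuously differentiable. If ψ is non-increasing on [ζ,ρ], then ∫_ζ^ρ ψ(r)q(r)/(ψ(r)² + q(r)) dr ≤ 1; and if ψ is non-decreasing on [ζ,ρ], then ∫_ζ^ρ ψ(r)q(r)/(ψ(r)² + q(r)) dr ≤ 1 + (1/4)·log(ψ(ρ)/ψ(ζ)). -/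
/-!
Put `x = -m ≥ 0`, so that `x' ≥ x² + q`, and let `F = x / (x + ψ) ∈ [0, 1)`. Then
`F' = (x' ψ - x ψ') / (x + ψ)² ≥ ψ (x² + q) / (x + ψ)² - x ψ' / (x + ψ)²`.
By Cauchy–Schwarz, `q (x + ψ)² ≤ (x² + q) (ψ² + q)`, so the first term dominates the integrand
`ψ q / (ψ² + q)`. If `ψ' ≤ 0` the second term helps; if `ψ' ≥ 0` then `4 x ψ ≤ (x + ψ)²` bounds its
loss by `ψ' / (4 ψ) = ((1/4) log ψ)'`. Both cases integrate the derivative of `F + c log ψ`, with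
`c = 0` and `c = 1/4` respectively. Since `m'` need not be integrable, the integration step is the
one-sided form `intervalIntegral.integral_le_sub_of_hasDeriv_right_of_le`.
-/

open Set MeasureTheory

/-- Cauchy–Schwarz for `(x, √q)` and `(√q, p)`, with `x = -m`, in the form of a bound on the
integrand `p q / (p² + q)`. -/
lemma integrand_le {m m' q p : ℝ} (hm : m ≤ 0) (hp : 0 < p) (hq : 0 ≤ q)
    (hric : m' + m ^ 2 + q ≤ 0) :
    p * q / (p ^ 2 + q) ≤ -m' * p / (p - m) ^ 2 := by
  have h1 : 0 < p - m := by linarith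
  rw [div_le_div_iff₀ (by positivity) (by positivity)]
  have h2 : q * (p - m) ^ 2 ≤ (m ^ 2 + q) * (p ^ 2 + q) := by
    nlinarith [sq_nonneg (q + m * p)]
  have h3 : (m ^ 2 + q) * (p ^ 2 + q) ≤ -m' * (p ^ 2 + q) :=
    mul_le_mul_of_nonneg_right (by linarith) (by positivity)
  nlinarith [mul_le_mul_of_nonneg_left (h2.trans h3) hp.le]

/-- The common form of both estimates: if `c ψ' / ψ` absorbs the term of `F'` that contains `ψ'`,
then the functional is at most `1 + c log (ψ ρ / ψ ζ)`. -/
lemma integral_le_of_absorb (c ζ ρ : ℝ) (hζρ : ζ < ρ)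
    (q m m' ψ ψ' : ℝ → ℝ)
    (hqc : ContinuousOn q (Icc ζ ρ))
    (hq0 : ∀ r ∈ Icc ζ ρ, 0 ≤ q r)
    (hm0 : ∀ r ∈ Icc ζ ρ, m r ≤ 0)
    (hm : ∀ r ∈ Icc ζ ρ, HasDerivWithinAt m (m' r) (Icc ζ ρ) r)
    (hric : ∀ r ∈ Icc ζ ρ, m' r + (m r) ^ 2 + q r ≤ 0)
    (hψ0 : ∀ r ∈ Icc ζ ρ, 0 < ψ r)
    (hψ : ∀ r ∈ Icc ζ ρ, HasDerivWithinAt ψ (ψ' r) (Icc ζ ρ) r)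
    (hc : ∀ r ∈ Ioo ζ ρ, -m r * ψ' r / (ψ r - m r) ^ 2 ≤ c * (ψ' r / ψ r)) :
    ∫ r in ζ..ρ, ψ r * q r / ((ψ r) ^ 2 + q r) ≤ 1 + c * Real.log (ψ ρ / ψ ζ) := by
  have hpos : ∀ r ∈ Icc ζ ρ, 0 < ψ r - m r := fun r hr => by
    linarith [hψ0 r hr, hm0 r hr]
  have hψc : ContinuousOn ψ (Icc ζ ρ) := fun r hr => (hψ r hr).continuousWithinAt
  have hF : ∀ r ∈ Icc ζ ρ, HasDerivWithinAt
      (fun r => -m r / (ψ r - m r) + c * Real.log (ψ r))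
      ((-m' r * (ψ r - m r) - -m r * (ψ' r - m' r)) / (ψ r - m r) ^ 2 + c * (ψ' r / ψ r))
      (Icc ζ ρ) r := fun r hr =>
    ((hm r hr).fun_neg.fun_div ((hψ r hr).fun_sub (hm r hr)) (hpos r hr).ne').fun_add
      (((hψ r hr).log (hψ0 r hr).ne').const_mul c)
  have hint : IntegrableOn (fun r => ψ r * q r / ((ψ r) ^ 2 + q r)) (Icc ζ ρ) := by
    refine ContinuousOn.integrableOn_Icc ((hψc.mul hqc).div ((hψc.pow 2).add hqc) fun r hr => ?_)
    have := hψ0 r hr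
    have := hq0 r hr
    positivity
  have key := intervalIntegral.integral_le_sub_of_hasDeriv_right_of_le hζρ.le
    (fun r hr => (hF r hr).continuousWithinAt)
    (fun r hr => ((hF r (Ioo_subset_Icc_self hr)).hasDerivAt
      (Icc_mem_nhds hr.1 hr.2)).hasDerivWithinAt) hint
    (fun r hr => by
      have hr' := Ioo_subset_Icc_self hr
      have h1 := integrand_le (hm0 r hr') (hψ0 r hr') (hq0 r hr') (hric r hr')
      have h2 := hc r hr
      have h3 : (-m' r * (ψ r - m r) - -m r * (ψ' r - m' r)) / (ψ r - m r) ^ 2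
          = -m' r * ψ r / (ψ r - m r) ^ 2 - -m r * ψ' r / (ψ r - m r) ^ 2 := by ring
      linarith)
  have hζm := left_mem_Icc.2 hζρ.le
  have hρm := right_mem_Icc.2 hζρ.le
  have h1 : -m ρ / (ψ ρ - m ρ) ≤ 1 := by
    rw [div_le_one (hpos ρ hρm)]
    linarith [hψ0 ρ hρm]
  have h2 : 0 ≤ -m ζ / (ψ ζ - m ζ) :=
    div_nonneg (by linarith [hm0 ζ hζm]) (hpos ζ hζm).le
  rw [Real.log_div (hψ0 ρ hρm).ne' (hψ0 ζ hζm).ne']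
  linarith

/-- Inequality (3.10) from the proof of Theorem 1.4: past the mean convex
radius (`m ≤ 0`), the functional is at most `1` for non-increasing `ψ`, and at
most `1 + (1/4)·log(ψ(ρ)/ψ(ζ))` for non-decreasing `ψ`. -/
theorem functional_past_convex_radius (ζ ρ : ℝ) (hζ : 0 ≤ ζ) (hζρ : ζ < ρ)
    (q m m' ψ ψ' : ℝ → ℝ)
    (hqc : ContinuousOn q (Icc ζ ρ))
    (hq0 : ∀ r ∈ Icc ζ ρ, 0 ≤ q r)
    (hm0 : ∀ r ∈ Icc ζ ρ, m r ≤ 0)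
    (hm : ∀ r ∈ Icc ζ ρ, HasDerivWithinAt m (m' r) (Icc ζ ρ) r)
    (hric : ∀ r ∈ Icc ζ ρ, m' r + (m r) ^ 2 + q r ≤ 0)
    (hψ0 : ∀ r ∈ Icc ζ ρ, 0 < ψ r)
    (hψ : ∀ r ∈ Icc ζ ρ, HasDerivWithinAt ψ (ψ' r) (Icc ζ ρ) r)
    (hψ'c : ContinuousOn ψ' (Icc ζ ρ)) :
    (AntitoneOn ψ (Icc ζ ρ) →
      ∫ r in ζ..ρ, ψ r * q r / ((ψ r) ^ 2 + q r) ≤ 1) ∧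
    (MonotoneOn ψ (Icc ζ ρ) →
      ∫ r in ζ..ρ, ψ r * q r / ((ψ r) ^ 2 + q r)
        ≤ 1 + (1 / 4) * Real.log (ψ ρ / ψ ζ)) := by
  have huniq : ∀ r ∈ Ioo ζ ρ, derivWithin ψ (Icc ζ ρ) r = ψ' r := fun r hr =>
    (hψ r (Ioo_subset_Icc_self hr)).derivWithin
      (uniqueDiffOn_Icc hζρ r (Ioo_subset_Icc_self hr))
  constructor
  · intro hanti
    have h := integral_le_of_absorb 0 ζ ρ hζρ q m m' ψ ψ' hqc hq0 hm0 hm hric hψ0 hψ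
      (fun r hr => by
        have hd : ψ' r ≤ 0 := huniq r hr ▸ hanti.derivWithin_nonpos
        have := hm0 r (Ioo_subset_Icc_self hr)
        rw [zero_mul]
        exact div_nonpos_of_nonpos_of_nonneg
          (mul_nonpos_of_nonneg_of_nonpos (by linarith) hd) (sq_nonneg _))
    simpa using h
  · intro hmono
    refine integral_le_of_absorb (1 / 4) ζ ρ hζρ q m m' ψ ψ' hqc hq0 hm0 hm hric hψ0 hψ
      (fun r hr => ?_)
    have hd : 0 ≤ ψ' r := huniq r hr ▸ hmono.derivWithin_nonneg
    have hmr := hm0 r (Ioo_subset_Icc_self hr)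
    have hp := hψ0 r (Ioo_subset_Icc_self hr)
    have hpm : 0 < ψ r - m r := by linarith
    rw [← mul_div_assoc, div_le_div_iff₀ (by positivity) hp]
    -- AM–GM: `4 (-m) ψ ≤ (ψ - m)²`, the difference being `(ψ + m)²`.
    nlinarith [mul_nonneg hd (sq_nonneg (ψ r + m r))]
end

section
/- Let q : [0,∞) → ℝ be continuous with q ≥ 0, and let m : [0,∞) → ℝ be differentiable with m ≥ 0 and m'(r) + m(r)² + q(r) ≤ 0 for all r ≥ 0. Then ∫₀^∞ q(r)/(1 + q(r)) dr ≤ 1. -/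
/-!
The function `g = 1 / (1 + m)` takes values in `(0, 1]`, and the Riccati inequality gives
`g' = -m' / (1 + m)² ≥ (m² + q) / (1 + m)² ≥ q / (1 + q)`. The last step is the identity
`(m² + q) (1 + q) - q (1 + m)² = (m - q)²`. Hence `∫₀ᴿ q / (1 + q) ≤ g R - g 0 ≤ 1` for every
`R ≥ 0`, and monotone convergence gives the bound on the half-line.
-/

open Set MeasureTheory

/-- The pointwise inequality `q / (1 + q) ≤ g'` for `g = 1 / (1 + m)`, where `d` stands for `m'`. -/
lemma div_one_add_le_of_riccati {q m d : ℝ} (hq : 0 ≤ q) (hm : 0 ≤ m)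
    (h : d + m ^ 2 + q ≤ 0) : q / (1 + q) ≤ -d / (1 + m) ^ 2 := by
  rw [div_le_div_iff₀ (by positivity) (by positivity)]
  nlinarith [sq_nonneg (m - q)]

/-- First part of Theorem 1.6 (Theorem 1.1 with `ψ ≡ 1`): along a ray,
`∫₀^∞ q/(1 + q) dr ≤ 1`. -/
theorem integral_q_div_one_add_q_le_one (q m m' : ℝ → ℝ)
    (hqc : ContinuousOn q (Ici 0))
    (hq0 : ∀ r ∈ Ici (0:ℝ), 0 ≤ q r)
    (hm0 : ∀ r ∈ Ici (0:ℝ), 0 ≤ m r)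
    (hm : ∀ r ∈ Ici (0:ℝ), HasDerivWithinAt m (m' r) (Ici 0) r)
    (hric : ∀ r ∈ Ici (0:ℝ), m' r + (m r) ^ 2 + q r ≤ 0) :
    ∫⁻ r in Ioi (0:ℝ), ENNReal.ofReal (q r / (1 + q r)) ≤ 1 := by
  have hfc : ContinuousOn (fun r => q r / (1 + q r)) (Ici 0) :=
    hqc.div (continuousOn_const.add hqc) fun r hr => by linarith [hq0 r hr]
  have hg : ∀ r ∈ Ici (0:ℝ),
      HasDerivWithinAt (fun r => (1 + m r)⁻¹) (-m' r / (1 + m r) ^ 2) (Ici 0) r :=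
    fun r hr => ((hm r hr).const_add 1).fun_inv (by linarith [hm0 r hr])
  have key : ∀ R : ℝ, 0 ≤ R → ∫⁻ r in Ioc 0 R, ENNReal.ofReal (q r / (1 + q r)) ≤ 1 := by
    intro R hR
    have hint : IntegrableOn (fun r => q r / (1 + q r)) (Icc 0 R) :=
      (hfc.mono Icc_subset_Ici_self).integrableOn_Icc
    have h1 : ∫ r in (0:ℝ)..R, q r / (1 + q r) ≤ (1 + m R)⁻¹ - (1 + m 0)⁻¹ :=
      intervalIntegral.integral_le_sub_of_hasDeriv_right_of_le hR
        (fun r hr => ((hg r hr.1).continuousWithinAt).mono Icc_subset_Ici_self)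
        (fun r hr => (hg r hr.1.le).mono (Ioi_subset_Ici hr.1.le)) hint
        (fun r hr => div_one_add_le_of_riccati (hq0 r hr.1.le) (hm0 r hr.1.le) (hric r hr.1.le))
    have h2 : (1 + m R)⁻¹ ≤ 1 := inv_le_one_of_one_le₀ (by linarith [hm0 R hR])
    have h3 : 0 ≤ (1 + m 0)⁻¹ := inv_nonneg.2 (by linarith [hm0 0 self_mem_Ici])
    rw [intervalIntegral.integral_of_le hR] at h1
    rw [← ofReal_integral_eq_lintegral_ofReal (hint.mono_set Ioc_subset_Icc_self)]
    · exact ENNReal.ofReal_le_one.2 (by linarith)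
    · filter_upwards [ae_restrict_mem measurableSet_Ioc] with r hr
      have := hq0 r hr.1.le
      simp only [Pi.zero_apply]
      positivity
  have hU : Ioi (0:ℝ) = ⋃ n : ℕ, Ioc (0:ℝ) n := by
    ext r
    simp only [mem_Ioi, mem_iUnion, mem_Ioc, exists_and_left]
    exact ⟨fun h => ⟨h, exists_nat_ge r⟩, fun h => h.1⟩
  have hmono : Monotone fun n : ℕ => Ioc (0:ℝ) n :=
    fun a b hab => Ioc_subset_Ioc_right (by exact_mod_cast hab)
  rw [hU, setLIntegral_iUnion_of_directed _ hmono.directed_le]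
  exact iSup_le fun n => key n n.cast_nonneg
end

section
/- Let 0 < ρ < ∞ and 0 ≤ ζ ≤ ρ, let q : [0,ρ] → ℝ be continuous with q ≥ 0, and let m : [0,ρ] → ℝ be differentiable with m'(r) + m(r)² + q(r) ≤ 0 on [0,ρ], with m ≥ 0 on [0,ζ] and m ≤ 0 on [ζ,ρ]. Then ∫₀^ρ q(r)/(1 + q(r)) dr ≤ 2. -/
/-!
The map `φ(x) = x / (1 + |x|)` is increasing and takes values in `(-1, 1)`, with derivative
`(1 + |x|)⁻²`. For `b ≥ 0` it satisfies `b / (1 + b) ≤ φ'(x) (x² + b)`, with equality at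
`b = |x|`; this amounts to `(|x| - b)² ≥ 0`. Hence the Riccati inequality gives
`q / (1 + q) ≤ -(φ ∘ m)'`, and integrating bounds the integral by
`φ(m(0)) - φ(m(ρ)) ≤ 2`. The sign change of `m` at `ζ` corresponds to a bound by `1` on each of
`[0, ζ]` and `[ζ, ρ]`; since `φ` is `C¹` across `0`, both parts can be treated at once.
-/

open Set MeasureTheory

lemma hasDerivAt_div_one_add_abs (x : ℝ) :
    HasDerivAt (fun y : ℝ => y / (1 + |y|)) (((1 + |x|) ^ 2)⁻¹) x := by
  rcases lt_trichotomy x 0 with hx | rfl | hx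
  · have hd : (1 + |x|) ≠ 0 := by positivity
    have h := (hasDerivAt_id x).div ((hasDerivAt_abs_neg hx).const_add 1) hd
    refine h.congr_deriv ?_
    rw [abs_of_neg hx] at hd ⊢
    simp only [id]
    field_simp
    ring
  -- `|·|` is not differentiable at `0`, so the difference quotient `1 / (1 + |t|)` is used.
  · rw [hasDerivAt_iff_tendsto_slope_zero]
    have hc : Filter.Tendsto (fun t : ℝ => (1 + |t|)⁻¹) (nhdsWithin 0 {0}ᶜ)
        (nhds ((1 + |(0 : ℝ)|)⁻¹)) := by
      have : ContinuousAt (fun t : ℝ => (1 + |t|)⁻¹) 0 := by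
        refine ContinuousAt.inv₀ (by fun_prop) (by simp)
      exact this.tendsto.mono_left nhdsWithin_le_nhds
    simp only [abs_zero, add_zero, one_pow, inv_one] at hc ⊢
    refine hc.congr' ?_
    filter_upwards [self_mem_nhdsWithin] with t ht
    have ht0 : t ≠ 0 := ht
    have hd : (1 + |t|) ≠ 0 := by positivity
    simp only [zero_add, smul_eq_mul, zero_div, sub_zero]
    field_simp
  · have hd : (1 + |x|) ≠ 0 := by positivity
    have h := (hasDerivAt_id x).div ((hasDerivAt_abs_pos hx).const_add 1) hd
    refine h.congr_deriv ?_
    rw [abs_of_pos hx] at hd ⊢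
    simp only [id]
    field_simp
    ring

lemma div_one_add_le {x b : ℝ} (hb : 0 ≤ b) :
    b / (1 + b) ≤ ((1 + |x|) ^ 2)⁻¹ * (x ^ 2 + b) := by
  rw [inv_mul_eq_div, div_le_div_iff₀ (by positivity) (by positivity), ← sq_abs x]
  -- The difference of the two sides is `(|x| - b)²`.
  nlinarith [sq_nonneg (|x| - b)]

lemma abs_div_one_add_abs_le_one (x : ℝ) : |x / (1 + |x|)| ≤ 1 := by
  rw [abs_div, abs_of_pos (by positivity : 0 < 1 + |x|), div_le_one (by positivity)]
  linarith

/-- Second part of Theorem 1.6 (Theorem 1.4 with `ψ ≡ 1`): along a geodesic to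
the first conjugate point, `∫₀^ρ q/(1 + q) dr ≤ 2`. -/
theorem integral_q_div_one_add_q_le_two (ρ ζ : ℝ) (hρ : 0 < ρ) (hζ0 : 0 ≤ ζ)
    (hζρ : ζ ≤ ρ)
    (q m m' : ℝ → ℝ)
    (hqc : ContinuousOn q (Icc 0 ρ))
    (hq0 : ∀ r ∈ Icc 0 ρ, 0 ≤ q r)
    (hm : ∀ r ∈ Icc 0 ρ, HasDerivWithinAt m (m' r) (Icc 0 ρ) r)
    (hric : ∀ r ∈ Icc 0 ρ, m' r + (m r) ^ 2 + q r ≤ 0)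
    (hm_nonneg : ∀ r ∈ Icc 0 ζ, 0 ≤ m r)
    (hm_nonpos : ∀ r ∈ Icc ζ ρ, m r ≤ 0) :
    ∫ r in (0:ℝ)..ρ, q r / (1 + q r) ≤ 2 := by
  have hder : ∀ r ∈ Icc 0 ρ, HasDerivWithinAt (fun r => -(m r / (1 + |m r|)))
      (-(((1 + |m r|) ^ 2)⁻¹ * m' r)) (Icc 0 ρ) r := fun r hr =>
    ((hasDerivAt_div_one_add_abs (m r)).comp_hasDerivWithinAt r (hm r hr)).neg
  have hint : IntegrableOn (fun r => q r / (1 + q r)) (Icc 0 ρ) :=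
    (hqc.div (continuousOn_const.add hqc)
      fun r hr => (by linarith [hq0 r hr] : 0 < 1 + q r).ne').integrableOn_Icc
  have key := intervalIntegral.integral_le_sub_of_hasDeriv_right_of_le hρ.le
    (fun r hr => (hder r hr).continuousWithinAt)
    (fun r hr => ((hder r (Ioo_subset_Icc_self hr)).hasDerivAt
      (Icc_mem_nhds hr.1 hr.2)).hasDerivWithinAt) hint
    (fun r hr => by
      have hr' := Ioo_subset_Icc_self hr
      refine (div_one_add_le (x := m r) (hq0 r hr')).trans ?_
      rw [← mul_neg]
      exact mul_le_mul_of_nonneg_left (by linarith [hric r hr']) (by positivity))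
  have h0 := abs_le.mp (abs_div_one_add_abs_le_one (m 0))
  have h1 := abs_le.mp (abs_div_one_add_abs_le_one (m ρ))
  linarith [h0.2, h1.1]
end

section
/- Let p > 2 and a, c, x > 0 be real numbers. Then ∫ₐ^∞ (x·c·r^{−p})/(x² + c·r^{−p}) dr > −a·x + (π/(p·sin(π/p)))·c^{1/p}·x^{1 − 2/p}. -/
/-!
Dividing numerator and denominator by `c r^(-p)`, the integrand is `x / (1 + k r^p)` with `k = x² / c`.

Over the whole half-line, Euler's trick evaluates the integral: write
`1 / (1 + k r^p) = ∫₀^∞ e^(-t) e^(-t k r^p) dt` and exchange the order of integration. The inner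
integral in `r` is `(t k)^(-1/p) Γ(1/p + 1)`, and the remaining one in `t` is `Γ(1 - 1/p)`, so the
reflection formula gives `∫₀^∞ dr / (1 + k r^p) = k^(-1/p) π / (p sin(π/p))`
(`integral_one_div_one_add_mul_rpow`). The piece over `(0, a]` that has to be removed is strictly
less than `a x`, because the integrand is strictly less than `x` there
(`integral_Ioc_lt`).
-/

open Set MeasureTheory Real

/-- The joint kernel `e^(-t) e^(-t k r^p)` whose two iterated integrals are compared. -/
noncomputable def eulerKernel (p k t r : ℝ) : ℝ := exp (-t) * exp (-(t * k) * r ^ p)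

lemma integral_eulerKernel_right {p k t : ℝ} (hp : 0 < p) (hk : 0 < k) (ht : 0 < t) :
    ∫ r in Ioi (0 : ℝ), eulerKernel p k t r
      = (k ^ (-1 / p) * Real.Gamma (1 / p + 1)) * (exp (-t) * t ^ ((1 - 1 / p) - 1)) := by
  simp only [eulerKernel]
  rw [integral_const_mul, integral_exp_neg_mul_rpow hp (mul_pos ht hk),
    mul_rpow ht.le hk.le]
  ring_nf

lemma integral_eulerKernel_left {p k r : ℝ} (hk : 0 < k) (hr : 0 < r) :
    ∫ t in Ioi (0 : ℝ), eulerKernel p k t r = 1 / (1 + k * r ^ p) := by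
  have h : 0 < 1 + k * r ^ p := by positivity
  have e : ∀ t, eulerKernel p k t r = exp (-(1 + k * r ^ p) * t) := fun t => by
    rw [eulerKernel, ← Real.exp_add]; ring_nf
  simp only [e]
  rw [integral_exp_mul_Ioi (by linarith)]
  rw [neg_div_neg_eq, mul_zero, Real.exp_zero]

lemma integrableOn_eulerKernel_right {p k t : ℝ} (hp : 0 < p) (hk : 0 < k) (ht : 0 < t) :
    IntegrableOn (fun r => eulerKernel p k t r) (Ioi 0) := by
  -- A non-integrable function would have Bochner integral zero.
  apply Integrable.of_integral_ne_zero
  rw [integral_eulerKernel_right hp hk ht]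
  have := Real.Gamma_pos_of_pos (show 0 < 1 / p + 1 by positivity)
  positivity

lemma integrable_eulerKernel {p k : ℝ} (hp : 1 < p) (hk : 0 < k) :
    Integrable (Function.uncurry (eulerKernel p k))
      ((volume.restrict (Ioi 0)).prod (volume.restrict (Ioi 0))) := by
  have hp0 : 0 < p := by linarith
  have hm : Measurable (Function.uncurry (eulerKernel p k)) := by
    unfold eulerKernel Function.uncurry
    fun_prop
  rw [integrable_prod_iff hm.aestronglyMeasurable]
  refine ⟨?_, ?_⟩
  · filter_upwards [ae_restrict_mem measurableSet_Ioi] with t ht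
    exact integrableOn_eulerKernel_right hp0 hk ht
  · have h1 : 0 < 1 - 1 / p := by
      rw [sub_pos, div_lt_one hp0]; exact hp
    refine ((Real.GammaIntegral_convergent h1).const_mul
      (k ^ (-1 / p) * Real.Gamma (1 / p + 1))).congr ?_
    filter_upwards [ae_restrict_mem measurableSet_Ioi] with t ht
    rw [← integral_eulerKernel_right hp0 hk ht]
    refine integral_congr_ae (.of_forall fun r => ?_)
    simp only [Function.uncurry, eulerKernel]
    rw [Real.norm_of_nonneg (by positivity)]

lemma integrableOn_one_div_one_add_mul_rpow {p k : ℝ} (hp : 1 < p) (hk : 0 < k) :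
    IntegrableOn (fun r : ℝ => 1 / (1 + k * r ^ p)) (Ioi 0) := by
  refine (integrable_eulerKernel hp hk).integral_prod_right.congr ?_
  filter_upwards [ae_restrict_mem measurableSet_Ioi] with r hr
  exact integral_eulerKernel_left hk hr

lemma integral_one_div_one_add_mul_rpow {p k : ℝ} (hp : 1 < p) (hk : 0 < k) :
    ∫ r in Ioi (0 : ℝ), 1 / (1 + k * r ^ p) = k ^ (-1 / p) * (π / (p * Real.sin (π / p))) := by
  have hp0 : 0 < p := by linarith
  have h1 : 0 < 1 - 1 / p := by
    rw [sub_pos, div_lt_one hp0]; exact hp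
  calc ∫ r in Ioi (0 : ℝ), 1 / (1 + k * r ^ p)
      = ∫ r in Ioi (0 : ℝ), ∫ t in Ioi (0 : ℝ), eulerKernel p k t r :=
        setIntegral_congr_fun measurableSet_Ioi fun r hr => (integral_eulerKernel_left hk hr).symm
    _ = ∫ t in Ioi (0 : ℝ), ∫ r in Ioi (0 : ℝ), eulerKernel p k t r :=
        (integral_integral_swap (integrable_eulerKernel hp hk)).symm
    _ = ∫ t in Ioi (0 : ℝ), (k ^ (-1 / p) * Real.Gamma (1 / p + 1)) *
          (exp (-t) * t ^ ((1 - 1 / p) - 1)) :=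
        setIntegral_congr_fun measurableSet_Ioi fun t ht => integral_eulerKernel_right hp0 hk ht
    _ = k ^ (-1 / p) * (1 / p * (Real.Gamma (1 / p) * Real.Gamma (1 - 1 / p))) := by
        rw [integral_const_mul, ← Real.Gamma_eq_integral h1,
          Real.Gamma_add_one (one_div_pos.mpr hp0).ne']
        ring
    _ = k ^ (-1 / p) * (π / (p * Real.sin (π / p))) := by
        rw [Real.Gamma_mul_Gamma_one_sub, mul_one_div, div_mul_div_comm, one_mul]

lemma integral_Ioc_lt {p k a : ℝ} (hp : 1 < p) (hk : 0 < k) (ha : 0 < a) :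
    ∫ r in Ioc (0 : ℝ) a, 1 / (1 + k * r ^ p) < a := by
  have hcont : ContinuousOn (fun r : ℝ => 1 / (1 + k * r ^ p)) (Icc 0 a) := by
    refine continuousOn_const.div (continuousOn_const.add (continuousOn_const.mul
      (continuousOn_id.rpow_const fun r _ => Or.inr (by linarith)))) fun r hr => ?_
    have : 0 ≤ r := hr.1
    change 1 + k * r ^ p ≠ 0
    positivity
  have hlt : ∀ r, 0 < r → 1 / (1 + k * r ^ p) < 1 := fun r hr => by
    have : 0 < k * r ^ p := by positivity
    rw [div_lt_one (by linarith)]; linarith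
  have h := intervalIntegral.integral_lt_integral_of_continuousOn_of_le_of_exists_lt ha hcont
    continuousOn_const (g := fun _ => (1 : ℝ)) (fun r hr => (hlt r hr.1).le)
    ⟨a, ⟨ha.le, le_rfl⟩, hlt a ha⟩
  rw [intervalIntegral.integral_of_le ha.le] at h
  simpa using h

/-- Key integral lower bound in the proof of Corollary 4.1: for `p > 2` and
`a, c, x > 0`,
`∫ₐ^∞ xc r^(−p)/(x² + c r^(−p)) dr > −ax + (π/(p sin(π/p))) c^(1/p) x^(1−2/p)`. -/
theorem integral_poly_decay_lower_bound (p a c x : ℝ) (hp : 2 < p)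
    (ha : 0 < a) (hc : 0 < c) (hx : 0 < x) :
    -a * x + (π / (p * Real.sin (π / p))) * c ^ (1 / p) * x ^ (1 - 2 / p)
      < ∫ r in Ioi a, x * c * r ^ (-p) / (x ^ 2 + c * r ^ (-p)) := by
  have hp1 : 1 < p := by linarith
  have hk : 0 < x ^ 2 / c := by positivity
  have hint := integrableOn_one_div_one_add_mul_rpow hp1 hk
  have hcongr : ∫ r in Ioi a, x * c * r ^ (-p) / (x ^ 2 + c * r ^ (-p))
      = x * ∫ r in Ioi a, 1 / (1 + x ^ 2 / c * r ^ p) := by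
    rw [← integral_const_mul]
    refine setIntegral_congr_fun measurableSet_Ioi fun r hr => ?_
    have hr0 : 0 < r := ha.trans hr
    have hrp : 0 < r ^ p := by positivity
    simp only [rpow_neg hr0.le]
    field_simp
    ring
  have hsplit : ∫ r in Ioi (0 : ℝ), 1 / (1 + x ^ 2 / c * r ^ p)
      = (∫ r in Ioc (0 : ℝ) a, 1 / (1 + x ^ 2 / c * r ^ p))
        + ∫ r in Ioi a, 1 / (1 + x ^ 2 / c * r ^ p) := by
    rw [← Ioc_union_Ioi_eq_Ioi ha.le]
    exact setIntegral_union (Ioc_disjoint_Ioi le_rfl) measurableSet_Ioi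
      (hint.mono_set Ioc_subset_Ioi_self) (hint.mono_set (Ioi_subset_Ioi ha.le))
  have hpow : x * (x ^ 2 / c) ^ (-1 / p) = c ^ (1 / p) * x ^ (1 - 2 / p) := by
    rw [div_rpow (by positivity) hc.le, ← rpow_natCast x 2, ← rpow_mul hx.le, neg_div,
      rpow_neg hc.le, sub_eq_add_neg, rpow_add hx, rpow_one]
    have e : ((2 : ℕ) : ℝ) * -(1 / p) = -(2 / p) := by push_cast; ring
    rw [e, div_inv_eq_mul]
    ring
  rw [integral_one_div_one_add_mul_rpow hp1 hk] at hsplit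
  have hlt := mul_lt_mul_of_pos_left (integral_Ioc_lt hp1 hk ha) hx
  have hmain := congrArg (x * ·) hsplit
  simp only [mul_add, ← mul_assoc, hpow] at hmain
  rw [hcongr]
  linarith
end

section
/- Let p > 2 and a > 0 be real numbers, and suppose c > (p^{2p}·sin^p(π/p)/(4·π^p))·(a/(p−2))^{p−2}. Then there exists x > 0 such that ∫ₐ^∞ (x·c·r^{−p})/(x² + c·r^{−p}) dr > 1. -/
/-!
Put `K = (π/p) / sin (π/p) = ∫₀^∞ dr / (1 + r^p)`. This value comes from writing
`1 / (1 + r^p) = ∫₀^∞ exp (-(1 + r^p) t) dt` and exchanging the integrals, which gives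
`Γ(1 + 1/p) Γ(1 - 1/p)`, and then from Euler's reflection formula.

With `b > 0` and `x² = c b^p`, the integrand is `x / (1 + (b r)^p)`, so the integral is
`(x/b) ∫_{ba}^∞ ds / (1 + s^p) ≥ (x/b) (K - b a)`, because the integrand is at most `1` on `(0, ba]`.
The right side is largest at `b = K (p-2) / (p a)`, where it equals `(x/b) (2K/p)`; the hypothesis
on `c` says exactly that this is greater than `1`.
-/

open Set MeasureTheory Real

/-- The Tonelli step: both iterated integrals of `exp (-(1 + r^p) t)` are computed. -/
lemma lintegral_one_add_rpow {p : ℝ} (hp : 1 < p) :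
    ∫⁻ r in Ioi (0:ℝ), ENNReal.ofReal (1 / (1 + r ^ p)) =
      ENNReal.ofReal (π / p / Real.sin (π / p)) := by
  have hp0 : 0 < p := by linarith
  have hip : 1 / p < 1 := (div_lt_one hp0).2 hp
  have hip0 : 0 < 1 / p := by positivity
  have hinner : ∀ r ∈ Ioi (0:ℝ), ENNReal.ofReal (1 / (1 + r ^ p)) =
      ∫⁻ t in Ioi (0:ℝ), ENNReal.ofReal (Real.exp (-(1 + r ^ p) * t)) := by
    intro r hr
    have hr0 : 0 < 1 + r ^ p := by
      have := Real.rpow_pos_of_pos hr p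
      linarith
    rw [← ofReal_integral_eq_lintegral_ofReal
      (integrableOn_exp_mul_Ioi (by linarith) 0)
      (Filter.Eventually.of_forall fun t => (Real.exp_pos _).le),
      integral_exp_mul_Ioi (by linarith) 0]
    congr 1
    rw [mul_zero, Real.exp_zero, neg_div_neg_eq]
  have houter : ∀ t ∈ Ioi (0:ℝ),
      ∫⁻ r in Ioi (0:ℝ), ENNReal.ofReal (Real.exp (-(1 + r ^ p) * t)) =
      ENNReal.ofReal (Real.Gamma (1 / p + 1)) *
        ENNReal.ofReal (Real.exp (-t) * t ^ ((1 - 1 / p) - 1)) := by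
    intro t ht
    have ht' : 0 < t := ht
    have hpos : 0 < t ^ (-1 / p) * Real.Gamma (1 / p + 1) :=
      mul_pos (Real.rpow_pos_of_pos ht' _) (Real.Gamma_pos_of_pos (by linarith))
    have hI := integral_exp_neg_mul_rpow hp0 ht'
    have hint : IntegrableOn (fun r : ℝ => Real.exp (-t * r ^ p)) (Ioi 0) := by
      by_contra h
      rw [integral_undef h] at hI
      linarith
    have heq : ∀ r : ℝ, Real.exp (-(1 + r ^ p) * t) =
        Real.exp (-t) * Real.exp (-t * r ^ p) := by
      intro r
      rw [← Real.exp_add]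
      congr 1
      ring
    simp_rw [heq]
    rw [← ofReal_integral_eq_lintegral_ofReal (hint.const_mul _)
      (Filter.Eventually.of_forall fun r => by positivity),
      integral_const_mul, hI, ← ENNReal.ofReal_mul (Real.Gamma_pos_of_pos (by linarith)).le]
    congr 1
    rw [show 1 - 1 / p - 1 = -1 / p by ring]
    ring
  rw [setLIntegral_congr_fun measurableSet_Ioi hinner,
    lintegral_lintegral_swap (by fun_prop),
    setLIntegral_congr_fun measurableSet_Ioi houter,
    lintegral_const_mul' _ _ ENNReal.ofReal_ne_top,
    ← ofReal_integral_eq_lintegral_ofReal (Real.GammaIntegral_convergent (by linarith)),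
    ← Real.Gamma_eq_integral (by linarith),
    ← ENNReal.ofReal_mul (Real.Gamma_pos_of_pos (by linarith)).le,
    Real.Gamma_add_one hip0.ne', mul_assoc, Real.Gamma_mul_Gamma_one_sub]
  · congr 1
    rw [show π * (1 / p) = π / p by ring]
    ring
  · filter_upwards [ae_restrict_mem measurableSet_Ioi] with t ht
    exact mul_nonneg (Real.exp_pos _).le (Real.rpow_nonneg (le_of_lt ht) _)

lemma integrableOn_one_add_rpow {p : ℝ} (hp : 1 < p) :
    IntegrableOn (fun r : ℝ => 1 / (1 + r ^ p)) (Ioi 0) := by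
  refine ⟨Measurable.aestronglyMeasurable (by fun_prop), ?_⟩
  rw [hasFiniteIntegral_iff_ofReal]
  · rw [lintegral_one_add_rpow hp]
    exact ENNReal.ofReal_lt_top
  · filter_upwards [ae_restrict_mem measurableSet_Ioi] with r hr
    have := Real.rpow_pos_of_pos hr p
    show 0 ≤ 1 / (1 + r ^ p)
    positivity

lemma sin_pi_div_pos {p : ℝ} (hp : 1 < p) : 0 < Real.sin (π / p) :=
  Real.sin_pos_of_pos_of_lt_pi (by positivity) (div_lt_self Real.pi_pos hp)

lemma integral_one_add_rpow {p : ℝ} (hp : 1 < p) :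
    ∫ r in Ioi (0:ℝ), 1 / (1 + r ^ p) = π / p / Real.sin (π / p) := by
  have hs := sin_pi_div_pos hp
  rw [integral_eq_lintegral_of_nonneg_ae _ (integrableOn_one_add_rpow hp).1,
    lintegral_one_add_rpow hp, ENNReal.toReal_ofReal (by positivity)]
  filter_upwards [ae_restrict_mem measurableSet_Ioi] with r hr
  have := Real.rpow_pos_of_pos hr p
  show 0 ≤ 1 / (1 + r ^ p)
  positivity

lemma le_integral_tail {p d : ℝ} (hp : 1 < p) (hd : 0 ≤ d) :
    π / p / Real.sin (π / p) - d ≤ ∫ r in Ioi d, 1 / (1 + r ^ p) := by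
  have hI := integrableOn_one_add_rpow hp
  have h0 : IntegrableOn (fun r : ℝ => 1 / (1 + r ^ p)) (Ioc 0 d) :=
    hI.mono_set Ioc_subset_Ioi_self
  have hsplit := setIntegral_union (Ioc_disjoint_Ioi le_rfl) measurableSet_Ioi h0
    (hI.mono_set (Ioi_subset_Ioi hd))
  rw [Ioc_union_Ioi_eq_Ioi hd, integral_one_add_rpow hp] at hsplit
  have hle : ∫ r in Ioc 0 d, 1 / (1 + r ^ p) ≤ ∫ r in Ioc 0 d, (1:ℝ) := by
    refine setIntegral_mono_on h0 (by simp) measurableSet_Ioc fun r hr => ?_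
    have := Real.rpow_pos_of_pos hr.1 p
    rw [div_le_one (by linarith)]
    linarith
  have h1 : ∫ r in Ioc 0 d, (1:ℝ) = d := by simp [hd]
  linarith

/-- The rescaling `s = b r`, valid when `x² = c b^p`. -/
lemma functional_eq {p a b c x : ℝ} (ha : 0 < a) (hb : 0 < b) (hc : 0 < c)
    (hx : x ^ 2 = c * b ^ p) :
    ∫ r in Ioi a, x * c * r ^ (-p) / (x ^ 2 + c * r ^ (-p)) =
      x / b * ∫ s in Ioi (b * a), 1 / (1 + s ^ p) := by
  have h := integral_comp_mul_left_Ioi (fun s : ℝ => 1 / (1 + s ^ p)) a hb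
  rw [smul_eq_mul] at h
  rw [div_eq_mul_inv, mul_assoc, ← h, ← integral_const_mul]
  refine setIntegral_congr_fun measurableSet_Ioi fun r hr => ?_
  have hr0 : 0 < r := ha.trans hr
  have hrp := Real.rpow_pos_of_pos hr0 p
  have hbp := Real.rpow_pos_of_pos hb p
  rw [hx, Real.mul_rpow hb.le hr0.le, Real.rpow_neg hr0.le]
  field_simp
  ring

theorem exists_x_functional_gt_one (p a c : ℝ) (hp : 2 < p) (ha : 0 < a)
    (hc : p ^ (2 * p) * Real.sin (π / p) ^ p / (4 * π ^ p)
            * (a / (p - 2)) ^ (p - 2) < c) :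
    ∃ x > (0:ℝ),
      1 < ∫ r in Ioi a, x * c * r ^ (-p) / (x ^ 2 + c * r ^ (-p)) := by
  have hp1 : 1 < p := by linarith
  have hp0 : 0 < p := by linarith
  have hp2 : 0 < p - 2 := by linarith
  have hs := sin_pi_div_pos hp1
  have hc0 : 0 < c := lt_of_le_of_lt (by positivity) hc
  obtain ⟨K, hK⟩ : ∃ K, K = π / p / Real.sin (π / p) := ⟨_, rfl⟩
  have hK0 : 0 < K := by rw [hK]; positivity
  obtain ⟨b, hb⟩ : ∃ b, b = K * (p - 2) / (p * a) := ⟨_, rfl⟩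
  have hb0 : 0 < b := by rw [hb]; positivity
  have hx2 : √(c * b ^ p) ^ 2 = c * b ^ p := Real.sq_sqrt (by positivity)
  have hx0 : 0 < √(c * b ^ p) := Real.sqrt_pos.2 (by positivity)
  refine ⟨√(c * b ^ p), hx0, ?_⟩
  rw [functional_eq ha hb0 hc0 hx2]
  have htail := le_integral_tail hp1 (mul_pos hb0 ha).le
  have hKb : K - b * a = 2 * K / p := by
    rw [hb]
    field_simp
    ring
  rw [← hK, hKb] at htail
  refine lt_of_lt_of_le ?_ (mul_le_mul_of_nonneg_left htail (by positivity))
  -- The threshold for `c`, rewritten in terms of `K` and `b`.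
  have hthr : p ^ (2 * p) * Real.sin (π / p) ^ p / (4 * π ^ p) * (a / (p - 2)) ^ (p - 2) * b ^ p
      = (b * p / (2 * K)) ^ 2 := by
    have hb' : b = (K / p) * ((p - 2) / a) := by rw [hb]; field_simp
    have hKp : K = π / (p * Real.sin (π / p)) := by rw [hK, div_div]
    have e1 : p ^ (2 * p) * Real.sin (π / p) ^ p / (4 * π ^ p) = (p / K) ^ p / 4 := by
      have : p / K = p * p * Real.sin (π / p) / π := by rw [hKp]; field_simp
      rw [this, Real.div_rpow (by positivity) Real.pi_pos.le,
        Real.mul_rpow (by positivity) hs.le, Real.mul_rpow hp0.le hp0.le,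
        ← Real.rpow_add hp0, two_mul]
      field_simp
    have e2 : (p / K) ^ p * b ^ p = ((p - 2) / a) ^ p := by
      rw [← Real.mul_rpow (by positivity) hb0.le]
      congr 1
      rw [hb']
      field_simp
    have e3 : (a / (p - 2)) ^ (p - 2) * ((p - 2) / a) ^ p = ((p - 2) / a) ^ 2 := by
      rw [← inv_div (p - 2) a, Real.inv_rpow (by positivity), ← Real.rpow_neg (by positivity),
        ← Real.rpow_add (by positivity), ← Real.rpow_natCast]
      congr 1
      push_cast
      ring
    calc _ = (a / (p - 2)) ^ (p - 2) * ((p / K) ^ p * b ^ p) / 4 := by rw [e1]; ring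
      _ = ((p - 2) / a) ^ 2 / 4 := by rw [e2, e3]
      _ = _ := by rw [hb']; field_simp; norm_num
  have hlt : b * p / (2 * K) < √(c * b ^ p) := by
    refine Real.lt_sqrt_of_sq_lt ?_
    rw [← hthr]
    exact mul_lt_mul_of_pos_right hc (Real.rpow_pos_of_pos hb0 p)
  have : √(c * b ^ p) / b * (2 * K / p) = √(c * b ^ p) / (b * p / (2 * K)) := by
    field_simp
  rw [this, one_lt_div (by positivity)]
  exact hlt
end
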